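/- arXiv:2508.09435 — 10 statements merged into one kernel-verified Lean document; each statement's English description precedes it below -/
import Mathlib

section
/- Let K be a field and let A, B be K-vector spaces such that A is the internal direct sum A = F ⊕ A_0 ⊕ ... ⊕ A_s and B is the internal direct sum B = B_0 ⊕ ... ⊕ B_s of linear subspaces, for some natural number s. Let T : A → B be a (possibly nonlinear) map, T_* : A → B a linear map, and R := T − T_* (pointwise difference). Assume: (i) T_*(A_n) ⊆ B_n for all n ∈ {0,...,s}; (ii) T_* is surjective; (iii) there is a linear map S_* : B → A with T_* ∘ S_* = id_B and S_*(B_n) ⊆ A_n for all n; (iv) for all n ∈ {0,...,s−1}, R(A_n ⊕ ... ⊕ A_s) ⊆ B_{n+1} ⊕ ... ⊕ B_s; (v) R(A_s) = {0}; (vi) for all n ∈ {1,...,s} and every x = x_0 + ... + x_s with x_k ∈ A_k (zero F-component), proj_{B_n}(R(x_0 + ... + x_s)) = proj_{B_n}(R(x_0 + ... + x_{n−1})). Then T is surjective. -/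
/-!
To solve `T x = y`, split `y` into its components `π n y` and look for `x = ∑ n, x n` with
`x n ∈ 𝒜 n`. Since the `n`-th component of `R = T - T⋆` at `x` depends only on the `x k` with
`k < n`, the equations `T⋆ (x n) = π n (y - R x)` form a triangular system: they are solved one
index at a time, because `T⋆` maps `𝒜 n` onto the `n`-th components. Summing them gives
`T⋆ x = y - R x`.
-/

theorem exists_forall_eq_apply_sum_lt {ι M : Type*} [Preorder ι] [Fintype ι] [DecidableLT ι]
    [AddCommMonoid M] (Φ : ι → M → M) :
    ∃ x : ι → M, ∀ n, x n = Φ n (∑ k with k < n, x k) := by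
  let step (n : ι) (x : ∀ k, k < n → M) : M := Φ n (∑ k, if hk : k < n then x k hk else 0)
  refine ⟨wellFounded_lt.fix step, fun n => ?_⟩
  rw [WellFounded.fix_eq]
  simp only [step, Finset.sum_filter, dite_eq_ite]

/-- The `n`-th component `π n ∘ R` of `R`, evaluated at a sum of elements `x k ∈ 𝒜 k`, depends only
on the terms with `k < n`. For minimal `n` the truncated sum is empty, so that this says that
`π n ∘ R` takes the constant value `π n (R 0)` on such sums. -/
def IsStrictlyTriangular {ι A B C : Type*} [Preorder ι] [Fintype ι] [DecidableLT ι]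
    [AddCommMonoid A] (𝒜 : ι → Set A) (π : ι → B → C) (R : A → B) : Prop :=
  ∀ n, ∀ x : ι → A, (∀ k, x k ∈ 𝒜 k) →
    π n (R (∑ k, x k)) = π n (R (∑ k with k < n, x k))

theorem stmt_0_general {ι A B : Type*} [Preorder ι] [Fintype ι] [DecidableLT ι]
    [AddCommMonoid A] [AddCommGroup B] (𝒜 : ι → Set A) (π : ι → B →+ B)
    (hπ_sum : ∀ y, ∑ n, π n y = y) (T : A → B) (Tstar : A →+ B)
    (hTstar : ∀ n y, ∃ x ∈ 𝒜 n, Tstar x = π n y)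
    (hR : IsStrictlyTriangular 𝒜 (fun n => π n) (T - Tstar)) :
    Function.Surjective T := by
  intro y
  choose lift lift_mem Tstar_lift using hTstar
  obtain ⟨x, hx⟩ := exists_forall_eq_apply_sum_lt fun n a => lift n (y - (T - Tstar) a)
  have hx_mem (n : ι) : x n ∈ 𝒜 n := hx n ▸ lift_mem n _
  have hx_component (n : ι) : Tstar (x n) = π n (y - (T - Tstar) (∑ k, x k)) := by
    have hR_trunc : π n ((T - Tstar) (∑ k, x k)) = π n ((T - Tstar) (∑ k with k < n, x k)) :=
      hR n x hx_mem
    rw [map_sub, hR_trunc, ← map_sub, hx n, Tstar_lift]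
  have hx_sum : Tstar (∑ k, x k) = y - (T - Tstar) (∑ k, x k) := by
    rw [map_sum, Finset.sum_congr rfl fun n _ => hx_component n, hπ_sum]
  refine ⟨∑ k, x k, ?_⟩
  rwa [Pi.sub_apply, eq_sub_iff_add_eq, add_sub_cancel] at hx_sum

section Filtration

variable {K ι A B C : Type*} [Semiring K] [AddCommMonoid A] [Module K A] [AddCommMonoid B]
  [Module K B] [AddCommMonoid C] [Module K C] [PartialOrder ι]
  {𝒜 : ι → Submodule K A} {ℬ : ι → Submodule K B} {R : A → B}

theorem apply_mem_iSup_gt_of_lt_top [OrderTop ι]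
    (hR : ∀ n < ⊤, ∀ x ∈ ⨆ k ≥ n, 𝒜 k, R x ∈ ⨆ k > n, ℬ k)
    (hR_top : ∀ x ∈ 𝒜 ⊤, R x = 0) (n : ι) :
    ∀ x ∈ ⨆ k ≥ n, 𝒜 k, R x ∈ ⨆ k > n, ℬ k := by
  intro x hx
  rcases eq_or_ne n ⊤ with rfl | hn
  · have hx_top : x ∈ 𝒜 ⊤ := by simpa only [ge_iff_le, top_le_iff, iSup_iSup_eq_left] using hx
    exact hR_top x hx_top ▸ zero_mem _
  · exact hR n hn.lt_top x hx

theorem IsStrictlyTriangular.of_bot [OrderBot ι] [Fintype ι] [DecidableLT ι]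
    {π : ι → B →ₗ[K] C} (hπ : ∀ k > ⊥, ∀ y ∈ ℬ k, π ⊥ y = 0)
    (hR_bot : ∀ x ∈ ⨆ k, 𝒜 k, R x ∈ ⨆ k > ⊥, ℬ k)
    (hR : ∀ n > ⊥, ∀ x : ι → A, (∀ k, x k ∈ 𝒜 k) →
      π n (R (∑ k, x k)) = π n (R (∑ k with k < n, x k))) :
    IsStrictlyTriangular (fun n => (𝒜 n : Set A)) (fun n => π n) R := by
  intro n x hx
  rcases eq_bot_or_bot_lt n with rfl | hn
  · have h_ker : ⨆ k > ⊥, ℬ k ≤ (π ⊥).ker := iSup₂_le hπ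
    have h_component (t : Finset ι) : π ⊥ (R (∑ k ∈ t, x k)) = 0 :=
      h_ker (hR_bot _ (sum_mem fun k _ => Submodule.mem_iSup_of_mem k (hx k)))
    exact (h_component _).trans (h_component _).symm
  · exact hR n hn x hx

end Filtration

/-- Abstract surjectivity theorem for the quasi-Trefftz operator.
`A = F ⊕ A₀ ⊕ ⋯ ⊕ A_s` and `B = B₀ ⊕ ⋯ ⊕ B_s` are internal direct sums of subspaces,
encoded through the (uniquely determined) linear projections `πF, πA n, πB n`
onto the summands.  Under hypotheses (i)–(vi) on `T = T⋆ + R`, the (possibly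
nonlinear) map `T` is surjective. -/
theorem stmt_0
    {K : Type*} [Field K]
    {A B : Type*} [AddCommGroup A] [Module K A] [AddCommGroup B] [Module K B]
    (s : ℕ)
    (F : Submodule K A) (𝒜 : Fin (s + 1) → Submodule K A)
    (ℬ : Fin (s + 1) → Submodule K B)
    -- the projections associated with the internal direct sum decompositions
    (πF : A →ₗ[K] A) (πA : Fin (s + 1) → A →ₗ[K] A)
    (πB : Fin (s + 1) → B →ₗ[K] B)
    (hπF_mem : ∀ x : A, πF x ∈ F)
    (hπA_mem : ∀ (n) (x : A), πA n x ∈ 𝒜 n)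
    (hπB_mem : ∀ (n) (y : B), πB n y ∈ ℬ n)
    (hπF_id : ∀ x ∈ F, πF x = x)
    (hπA_id : ∀ n, ∀ x ∈ 𝒜 n, πA n x = x)
    (hπB_id : ∀ n, ∀ y ∈ ℬ n, πB n y = y)
    (hπF_zero : ∀ n, ∀ x ∈ 𝒜 n, πF x = 0)
    (hπA_zeroF : ∀ n, ∀ x ∈ F, πA n x = 0)
    (hπA_zero : ∀ n m, n ≠ m → ∀ x ∈ 𝒜 m, πA n x = 0)
    (hπB_zero : ∀ n m, n ≠ m → ∀ y ∈ ℬ m, πB n y = 0)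
    (hA_decomp : ∀ x : A, x = πF x + ∑ n, πA n x)
    (hB_decomp : ∀ y : B, y = ∑ n, πB n y)
    -- the maps
    (T : A → B) (Tstar : A →ₗ[K] B) (R : A → B)
    (hR : ∀ x, R x = T x - Tstar x)
    -- (i)
    (hT1 : ∀ n, ∀ x ∈ 𝒜 n, Tstar x ∈ ℬ n)
    -- (ii)
    (hT2 : Function.Surjective Tstar)
    -- (iii)
    (Sstar : B →ₗ[K] A)
    (hS1 : ∀ y, Tstar (Sstar y) = y)
    (hS2 : ∀ n, ∀ y ∈ ℬ n, Sstar y ∈ 𝒜 n)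
    -- (iv)
    (hR1 : ∀ n : Fin (s + 1), (n : ℕ) < s →
      ∀ x ∈ (⨆ k ≥ n, 𝒜 k : Submodule K A), R x ∈ (⨆ k > n, ℬ k : Submodule K B))
    -- (v)
    (hR2 : ∀ x ∈ 𝒜 (Fin.last s), R x = 0)
    -- (vi)
    (hR3 : ∀ n : Fin (s + 1), 0 < n → ∀ xk : Fin (s + 1) → A, (∀ k, xk k ∈ 𝒜 k) →
      πB n (R (∑ k, xk k)) =
        πB n (R (∑ k ∈ Finset.univ.filter (fun k => k < n), xk k))) :
    Function.Surjective T := by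
  obtain rfl : R = T - ⇑Tstar := funext hR
  have hR_bot : ∀ x ∈ ⨆ k, 𝒜 k, (T - ⇑Tstar) x ∈ ⨆ k > 0, ℬ k := by
    simpa only [ge_iff_le, Fin.zero_le, iSup_pos] using apply_mem_iSup_gt_of_lt_top hR1 hR2 0
  exact stmt_0_general (fun n => 𝒜 n) (fun n => πB n) (fun y => (hB_decomp y).symm) T Tstar
    (fun n y => ⟨Sstar (πB n y), hS2 n _ (hπB_mem n y), hS1 _⟩)
    (.of_bot (fun k hk => hπB_zero 0 k hk.ne) hR_bot hR3)
end

section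
/- Let K be a field and let A, B be K-vector spaces such that A is the internal direct sum A = F ⊕ A_0 ⊕ ... ⊕ A_s and B is the internal direct sum B = B_0 ⊕ ... ⊕ B_s of linear subspaces, for some natural number s. Let R : A → B be a map with R(A_0 ⊕ ... ⊕ A_s) ⊆ B_1 ⊕ ... ⊕ B_s and such that for all n ∈ {1,...,s} and all x_k ∈ A_k, proj_{B_n}(R(x_0 + ... + x_s)) = proj_{B_n}(R(x_0 + ... + x_{n−1})). Let S_* : B → A be a linear map with S_*(B_n) ⊆ A_n for all n. Fix y ∈ B with components y_k ∈ B_k, and suppose x = x_0 + ... + x_s with x_k ∈ A_k satisfies x_0 = S_*(y_0) and x_k = S_*( y_k − proj_{B_k}( R(x_0 + ... + x_{k−1}) ) ) for all k ∈ {1,...,s}. Then x = S_*( y − R(x) ). -/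
/-!
Writing `x = ∑ k, x k`, each component satisfies `x k = S (π k (y - R x))`: for `k = ⊥` because
`R x` has no component at `⊥`, and for `k > ⊥` because `π k (R x)` depends only on the components
of `x` strictly below `k`, which is what the recursion uses. Since the projections `π k` sum to
the identity, additivity of `S` gives `x = S (y - R x)`.
-/

theorem map_eq_zero_of_mem_biSup {ι K M N : Type*} [Semiring K]
    [AddCommMonoid M] [Module K M] [AddCommMonoid N] [Module K N]
    {p : ι → Submodule K M} {q : ι → Prop} {f : M →ₗ[K] N}
    (hf : ∀ i, q i → ∀ z ∈ p i, f z = 0) {z : M} (hz : z ∈ ⨆ (i) (_ : q i), p i) :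
    f z = 0 :=
  (iSup₂_le hf : _ ≤ LinearMap.ker f) hz

section ForwardSubstitution

variable {ι A B P : Type*} [Fintype ι] [PartialOrder ι] [OrderBot ι] [DecidableLT ι]
  [AddCommMonoid A] [AddCommGroup B] [FunLike P B B] [AddMonoidHomClass P B B]
  {π : ι → P} {R : A → B} {y : B} {x : ι → A}

theorem eq_apply_proj_sub_of_forward_substitution {S : B → A}
    (hR_bot : π ⊥ (R (∑ k, x k)) = 0)
    (hR_lt : ∀ n, ⊥ < n → π n (R (∑ k, x k)) = π n (R (∑ k with k < n, x k)))
    (hx_bot : x ⊥ = S (π ⊥ y))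
    (hx : ∀ n, ⊥ < n → x n = S (π n y - π n (R (∑ k with k < n, x k)))) (n : ι) :
    x n = S (π n (y - R (∑ k, x k))) := by
  rcases eq_bot_or_bot_lt n with rfl | hn
  · rw [map_sub, hR_bot, sub_zero, hx_bot]
  · rw [map_sub, hR_lt n hn, ← hx n hn]

theorem stmt_4_general {Q : Type*} [FunLike Q B A] [AddMonoidHomClass Q B A] {S : Q}
    (hπ : ∀ z, ∑ k, π k z = z)
    (hR_bot : π ⊥ (R (∑ k, x k)) = 0)
    (hR_lt : ∀ n, ⊥ < n → π n (R (∑ k, x k)) = π n (R (∑ k with k < n, x k)))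
    (hx_bot : x ⊥ = S (π ⊥ y))
    (hx : ∀ n, ⊥ < n → x n = S (π n y - π n (R (∑ k with k < n, x k)))) :
    ∑ k, x k = S (y - R (∑ k, x k)) := by
  calc ∑ k, x k = ∑ k, S (π k (y - R (∑ k, x k))) :=
        Finset.sum_congr rfl fun k _ ↦
          eq_apply_proj_sub_of_forward_substitution hR_bot hR_lt hx_bot hx k
    _ = S (∑ k, π k (y - R (∑ k, x k))) := (map_sum S _ _).symm
    _ = S (y - R (∑ k, x k)) := by rw [hπ]

end ForwardSubstitution

/-- With the internal direct sums `A = F ⊕ A₀ ⊕ ⋯ ⊕ A_s` and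
`B = B₀ ⊕ ⋯ ⊕ B_s` (encoded by their projections), `R : A → B` satisfying
`R(A₀ ⊕ ⋯ ⊕ A_s) ⊆ B₁ ⊕ ⋯ ⊕ B_s` and the projection property (vi), and `S⋆`
linear with `S⋆(Bₙ) ⊆ Aₙ`: if the components `xₖ ∈ Aₖ` satisfy the forward
substitution recursion for a given `y ∈ B`, then `x = S⋆(y − R(x))`. -/
theorem stmt_4
    {K : Type*} [Field K]
    {A B : Type*} [AddCommGroup A] [Module K A] [AddCommGroup B] [Module K B]
    (s : ℕ)
    (F : Submodule K A) (𝒜 : Fin (s + 1) → Submodule K A)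
    (ℬ : Fin (s + 1) → Submodule K B)
    (πF : A →ₗ[K] A) (πA : Fin (s + 1) → A →ₗ[K] A)
    (πB : Fin (s + 1) → B →ₗ[K] B)
    (hπF_mem : ∀ x : A, πF x ∈ F)
    (hπA_mem : ∀ (n) (x : A), πA n x ∈ 𝒜 n)
    (hπB_mem : ∀ (n) (y : B), πB n y ∈ ℬ n)
    (hπF_id : ∀ x ∈ F, πF x = x)
    (hπA_id : ∀ n, ∀ x ∈ 𝒜 n, πA n x = x)
    (hπB_id : ∀ n, ∀ y ∈ ℬ n, πB n y = y)
    (hπF_zero : ∀ n, ∀ x ∈ 𝒜 n, πF x = 0)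
    (hπA_zeroF : ∀ n, ∀ x ∈ F, πA n x = 0)
    (hπA_zero : ∀ n m, n ≠ m → ∀ x ∈ 𝒜 m, πA n x = 0)
    (hπB_zero : ∀ n m, n ≠ m → ∀ y ∈ ℬ m, πB n y = 0)
    (hA_decomp : ∀ x : A, x = πF x + ∑ n, πA n x)
    (hB_decomp : ∀ y : B, y = ∑ n, πB n y)
    -- the maps
    (R : A → B)
    (hR0 : ∀ x ∈ (⨆ k, 𝒜 k : Submodule K A),
      R x ∈ (⨆ k > (0 : Fin (s + 1)), ℬ k : Submodule K B))
    (hR3 : ∀ n : Fin (s + 1), 0 < n → ∀ xk : Fin (s + 1) → A, (∀ k, xk k ∈ 𝒜 k) →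
      πB n (R (∑ k, xk k)) =
        πB n (R (∑ k ∈ Finset.univ.filter (fun k => k < n), xk k)))
    (Sstar : B →ₗ[K] A)
    (hS : ∀ n, ∀ y ∈ ℬ n, Sstar y ∈ 𝒜 n)
    -- the fixed data
    (y : B) (xk : Fin (s + 1) → A)
    (hxk_mem : ∀ k, xk k ∈ 𝒜 k)
    (hxk0 : xk 0 = Sstar (πB 0 y))
    (hxk : ∀ k : Fin (s + 1), 0 < k →
      xk k = Sstar (πB k y -
        πB k (R (∑ l ∈ Finset.univ.filter (fun l => l < k), xk l)))) :
    ∑ k, xk k = Sstar (y - R (∑ k, xk k)) := by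
  have hR_bot : πB 0 (R (∑ k, xk k)) = 0 :=
    map_eq_zero_of_mem_biSup (fun m hm ↦ hπB_zero 0 m hm.ne)
      (hR0 _ (Submodule.sum_mem_iSup hxk_mem))
  exact stmt_4_general (fun z ↦ (hB_decomp z).symm) hR_bot
    (fun n hn ↦ hR3 n hn xk hxk_mem) hxk0 hxk
end

section
/- Let K be a field and let A, B be K-vector spaces such that A is the internal direct sum A = F ⊕ A_0 ⊕ ... ⊕ A_s and B is the internal direct sum B = B_0 ⊕ ... ⊕ B_s of linear subspaces, for some natural number s. Let T : A → B be a (possibly nonlinear) map, T_* : A → B a linear map, and R := T − T_*. Assume: T_*(A_n) ⊆ B_n for all n; R(A_n ⊕ ... ⊕ A_s) ⊆ B_{n+1} ⊕ ... ⊕ B_s for all n ∈ {0,...,s−1}; R(A_s) = {0}; T_*(F) = {0}; each A_n decomposes as an internal direct sum A_n = U_n ⊕ V_n such that the restriction of T_* to V_n is a linear bijection onto B_n, with inverse S_n : B_n → V_n; and for every x = z + x_0 + ... + x_s with z ∈ F and x_k ∈ A_k, proj_{B_0}(R(x)) = proj_{B_0}(R(z)) and proj_{B_n}(R(x)) = proj_{B_n}(R(z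 + x_0 + ... + x_{n−1})) for all n ∈ {1,...,s}. Fix y ∈ B with components y_k ∈ B_k, z ∈ F, and u_k ∈ U_k for k ∈ {0,...,s}. Define recursively x_0 := u_0 + S_0( y_0 − proj_{B_0}(R(z)) − T_*(u_0) ) and, for k ∈ {1,...,s}, x_k := u_k + S_k( y_k − proj_{B_k}( R(z + x_0 + ... + x_{k−1}) ) − T_*(u_k) ). Then x := z + x_0 + ... + x_s satisfies T(x) = y. -/
/-!
Adding `S (c - L u)` to `u`, where `S` is a right inverse of `L`, corrects the value of `L` to `c`.
Hence the recursion solves `T⋆ xₖ = yₖ - projₖ (R (z + ∑ l < k, xₗ))`. As the `k`-th component of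
`R` only sees `z` and the `xₗ` with `l < k`, the right-hand side is `yₖ - projₖ (R x)` for the full
sum `x`. Summing over `k` gives `T⋆ x = y - R x`.
-/

section

variable {A B : Type*} [AddCommMonoid A] [AddCommGroup B]

theorem map_add_rightInvOn_sub {L : A →+ B} {S : B → A} {H : AddSubgroup B}
    (hS : Set.RightInvOn S L H) {u : A} {c : B} (hu : L u ∈ H) (hc : c ∈ H) :
    L (u + S (c - L u)) = c := by
  rw [map_add, hS (sub_mem hc hu), add_sub_cancel]

theorem add_mapsTo_sub_mem {L : A → B} {S : B → A} {M : AddSubmonoid A} {H : AddSubgroup B}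
    (hL : Set.MapsTo L M H) (hS : Set.MapsTo S H M) {u : A} {c : B} (hu : u ∈ M) (hc : c ∈ H) :
    u + S (c - L u) ∈ M :=
  add_mem hu (hS (sub_mem hc (hL hu)))

theorem forall_add_sum_lt_of_zero_of_pos {s : ℕ} {P : Fin (s + 1) → A → Prop} {z : A}
    {x : Fin (s + 1) → A} (h_zero : P 0 z) (h_pos : ∀ k, 0 < k → P k (z + ∑ l with l < k, x l))
    (k : Fin (s + 1)) : P k (z + ∑ l with l < k, x l) := by
  obtain rfl | hk := k.zero_le.eq_or_lt
  · simpa using h_zero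
  · exact h_pos k hk

variable {ι : Type*} [Fintype ι]

theorem map_sum_eq_sub_of_components {L : A →+ B} {p : ι → B → B}
    (hp_sum : ∀ b, ∑ k, p k b = b) {x : ι → A} {y w : B} (hx : ∀ k, L (x k) = p k y - p k w) :
    L (∑ k, x k) = y - w := by
  simp only [map_sum, hx, Finset.sum_sub_distrib, hp_sum]

theorem stmt_5_general [LT ι] [DecidableLT ι]
    {𝒜 : ι → AddSubmonoid A} {ℬ : ι → AddSubgroup B} {p : ι → B → B}
    (hp_mem : ∀ k b, p k b ∈ ℬ k) (hp_sum : ∀ b, ∑ k, p k b = b)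
    {T : A → B} {Tstar : A →+ B} {R : A → B} (hR : ∀ x, R x = T x - Tstar x)
    (hTstar : ∀ k, Set.MapsTo Tstar (𝒜 k) (ℬ k))
    {S : ι → B → A} (hS_mem : ∀ k, Set.MapsTo (S k) (ℬ k) (𝒜 k))
    (hS_right : ∀ k, Set.RightInvOn (S k) Tstar (ℬ k))
    {z : A} (hz : Tstar z = 0)
    (hR_proj : ∀ x : ι → A, (∀ k, x k ∈ 𝒜 k) → ∀ k,
      p k (R (z + ∑ l, x l)) = p k (R (z + ∑ l with l < k, x l)))
    {y : B} {u x : ι → A} (hu : ∀ k, u k ∈ 𝒜 k)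
    (hx : ∀ k, x k = u k + S k (p k y - p k (R (z + ∑ l with l < k, x l)) - Tstar (u k))) :
    T (z + ∑ k, x k) = y := by
  have target_mem (k : ι) (w : B) : p k y - p k w ∈ ℬ k := sub_mem (hp_mem k y) (hp_mem k w)
  have x_mem (k : ι) : x k ∈ 𝒜 k := by
    rw [hx k]
    exact add_mapsTo_sub_mem (hTstar k) (hS_mem k) (hu k) (target_mem k _)
  have Tstar_x (k : ι) : Tstar (x k) = p k y - p k (R (z + ∑ l, x l)) := by
    rw [hR_proj x x_mem k, hx k]
    exact map_add_rightInvOn_sub (hS_right k) (hTstar k (hu k)) (target_mem k _)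
  have Tstar_sum : Tstar (z + ∑ k, x k) = y - R (z + ∑ k, x k) := by
    rw [map_add, hz, zero_add, map_sum_eq_sub_of_components hp_sum Tstar_x]
  rw [← sub_add_cancel (T _) (Tstar _), ← hR, Tstar_sum, add_sub_cancel]

end

/-- Correctness of the construction algorithm: with
`A = F ⊕ A₀ ⊕ ⋯ ⊕ A_s`, `B = B₀ ⊕ ⋯ ⊕ B_s` internal direct sums (encoded by their
projections), `T = T⋆ + R`, `T⋆` linear with `T⋆(Aₙ) ⊆ Bₙ`, `T⋆(F) = {0}`,
`R(Aₙ ⊕ ⋯ ⊕ A_s) ⊆ B_{n+1} ⊕ ⋯ ⊕ B_s` for `n < s`, `R(A_s) = {0}`, internal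
splittings `Aₙ = Uₙ ⊕ Vₙ` with `T⋆|_{Vₙ} : Vₙ → Bₙ` a linear bijection with inverse
`Sₙ`, and the projection property on `R`: the recursively defined components
`xₖ` produce `x = z + x₀ + ⋯ + x_s` with `T(x) = y`. -/
theorem stmt_5
    {K : Type*} [Field K]
    {A B : Type*} [AddCommGroup A] [Module K A] [AddCommGroup B] [Module K B]
    (s : ℕ)
    (F : Submodule K A) (𝒜 : Fin (s + 1) → Submodule K A)
    (ℬ : Fin (s + 1) → Submodule K B)
    (πF : A →ₗ[K] A) (πA : Fin (s + 1) → A →ₗ[K] A)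
    (πB : Fin (s + 1) → B →ₗ[K] B)
    (hπF_mem : ∀ x : A, πF x ∈ F)
    (hπA_mem : ∀ (n) (x : A), πA n x ∈ 𝒜 n)
    (hπB_mem : ∀ (n) (y : B), πB n y ∈ ℬ n)
    (hπF_id : ∀ x ∈ F, πF x = x)
    (hπA_id : ∀ n, ∀ x ∈ 𝒜 n, πA n x = x)
    (hπB_id : ∀ n, ∀ y ∈ ℬ n, πB n y = y)
    (hπF_zero : ∀ n, ∀ x ∈ 𝒜 n, πF x = 0)
    (hπA_zeroF : ∀ n, ∀ x ∈ F, πA n x = 0)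
    (hπA_zero : ∀ n m, n ≠ m → ∀ x ∈ 𝒜 m, πA n x = 0)
    (hπB_zero : ∀ n m, n ≠ m → ∀ y ∈ ℬ m, πB n y = 0)
    (hA_decomp : ∀ x : A, x = πF x + ∑ n, πA n x)
    (hB_decomp : ∀ y : B, y = ∑ n, πB n y)
    -- the maps
    (T : A → B) (Tstar : A →ₗ[K] B) (R : A → B)
    (hR : ∀ x, R x = T x - Tstar x)
    (hT1 : ∀ n, ∀ x ∈ 𝒜 n, Tstar x ∈ ℬ n)
    (hR1 : ∀ n : Fin (s + 1), (n : ℕ) < s →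
      ∀ x ∈ (⨆ k ≥ n, 𝒜 k : Submodule K A), R x ∈ (⨆ k > n, ℬ k : Submodule K B))
    (hR2 : ∀ x ∈ 𝒜 (Fin.last s), R x = 0)
    (hTF : ∀ x ∈ F, Tstar x = 0)
    -- the internal splittings `Aₙ = Uₙ ⊕ Vₙ`
    (𝒰 𝒱 : Fin (s + 1) → Submodule K A)
    (hUV_sup : ∀ n, 𝒰 n ⊔ 𝒱 n = 𝒜 n)
    (hUV_inf : ∀ n, 𝒰 n ⊓ 𝒱 n = ⊥)
    -- `Sₙ : Bₙ → Vₙ` is the inverse of the linear bijection `T⋆|_{Vₙ} : Vₙ → Bₙ`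
    (Sn : Fin (s + 1) → B →ₗ[K] A)
    (hSn_mem : ∀ n, ∀ y ∈ ℬ n, Sn n y ∈ 𝒱 n)
    (hSn_right : ∀ n, ∀ y ∈ ℬ n, Tstar (Sn n y) = y)
    (hSn_left : ∀ n, ∀ v ∈ 𝒱 n, Sn n (Tstar v) = v)
    -- projection property of `R` with respect to an `F`-component
    (hR4 : ∀ (z : A), z ∈ F → ∀ xk : Fin (s + 1) → A, (∀ k, xk k ∈ 𝒜 k) →
      πB 0 (R (z + ∑ k, xk k)) = πB 0 (R z) ∧
      ∀ n : Fin (s + 1), 0 < n →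
        πB n (R (z + ∑ k, xk k)) =
          πB n (R (z + ∑ k ∈ Finset.univ.filter (fun k => k < n), xk k)))
    -- the fixed data and the recursively constructed components
    (y : B) (z : A) (hz : z ∈ F)
    (u : Fin (s + 1) → A) (hu : ∀ k, u k ∈ 𝒰 k)
    (xk : Fin (s + 1) → A)
    (hxk0 : xk 0 = u 0 + Sn 0 (πB 0 y - πB 0 (R z) - Tstar (u 0)))
    (hxk : ∀ k : Fin (s + 1), 0 < k →
      xk k = u k + Sn k (πB k y -
        πB k (R (z + ∑ l ∈ Finset.univ.filter (fun l => l < k), xk l)) -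
        Tstar (u k))) :
    T (z + ∑ k, xk k) = y := by
  have 𝒰_le (k) : 𝒰 k ≤ 𝒜 k := hUV_sup k ▸ le_sup_left
  have 𝒱_le (k) : 𝒱 k ≤ 𝒜 k := hUV_sup k ▸ le_sup_right
  have R_proj (x : Fin (s + 1) → A) (hx : ∀ k, x k ∈ 𝒜 k) :=
    forall_add_sum_lt_of_zero_of_pos (P := fun k a => πB k (R (z + ∑ l, x l)) = πB k (R a))
      (hR4 z hz x hx).1 (hR4 z hz x hx).2
  have recursion := forall_add_sum_lt_of_zero_of_pos
    (P := fun k a => xk k = u k + Sn k (πB k y - πB k (R a) - Tstar (u k))) hxk0 hxk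
  exact stmt_5_general (𝒜 := fun k => (𝒜 k).toAddSubmonoid) (ℬ := fun k => (ℬ k).toAddSubgroup)
    (p := fun k => πB k) (Tstar := Tstar.toAddMonoidHom) (S := fun k => Sn k)
    hπB_mem (fun b => (hB_decomp b).symm) hR hT1 (fun k b hb => 𝒱_le k (hSn_mem k b hb)) hSn_right
    (hTF z hz) R_proj (fun k => 𝒰_le k (hu k)) recursion
end

section
/- Let K be a field and let A, B be K-vector spaces such that A is the internal direct sum A = F ⊕ A_0 ⊕ ... ⊕ A_s and B is the internal direct sum B = B_0 ⊕ ... ⊕ B_s of linear subspaces, for some natural number s. Let T : A → B be a (possibly nonlinear) map, T_* : A → B a linear map, and R := T − T_*. Assume: T_*(A_n) ⊆ B_n for all n; R(A_n ⊕ ... ⊕ A_s) ⊆ B_{n+1} ⊕ ... ⊕ B_s for all n ∈ {0,...,s−1}; R(A_s) = {0}; T_*(F) = {0}; each A_n decomposes as an internal direct sum A_n = U_n ⊕ V_n such that the restriction of T_* to V_n is a linear bijection onto B_n; and for every x = z + x_0 + ... + x_s with z ∈ F and x_k ∈ A_k, proj_{B_0}(R(x)) = proj_{B_0}(R(z)) and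 proj_{B_n}(R(x)) = proj_{B_n}(R(z + x_0 + ... + x_{n−1})) for all n ∈ {1,...,s}. Then for every y ∈ B, every z ∈ F, and every choice of u_k ∈ U_k (k = 0,...,s), there exists x ∈ A with T(x) = y whose F-component equals z and whose U_k-component equals u_k for every k ∈ {0,...,s} (components taken with respect to the decomposition A = F ⊕ (U_0 ⊕ V_0) ⊕ ... ⊕ (U_s ⊕ V_s)). -/
/-!
Since `T = T⋆ + R`, `T⋆ z = 0` and `projₙ ∘ R` ignores the components from `n` onwards, the
`Bₙ`-component of the equation `T (z + ∑ₖ xₖ) = y` reads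
`T⋆ xₙ = projₙ (y - R (z + ∑_{k < n} xₖ))`. This is a triangular system: writing `xₙ = uₙ + vₙ`,
it is solved for `vₙ ∈ Vₙ` one index after the other, because `T⋆` maps `Vₙ` onto `Bₙ`.
-/

theorem exists_forall_of_dependsOn_Iio {ι : Type*} [Preorder ι] [WellFoundedLT ι]
    {α : ι → Type*} [∀ n, Nonempty (α n)] {P : ∀ n, (∀ k, α k) → α n → Prop}
    (hP : ∀ n, DependsOn (P n) (Set.Iio n)) (hex : ∀ n f, ∃ a, P n f a) :
    ∃ f : ∀ n, α n, ∀ n, P n f (f n) := by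
  classical
  choose next hnext using hex
  let extend (n : ι) (g : ∀ k, k < n → α k) : ∀ k, α k :=
    fun k => if hk : k < n then g k hk else Classical.arbitrary (α k)
  let f : ∀ n, α n := WellFoundedLT.fix fun n g => next n (extend n g)
  have f_eq (n : ι) : f n = next n (extend n fun k _ => f k) := WellFoundedLT.fix_eq _ n
  refine ⟨f, fun n => ?_⟩
  have agree : P n f = P n (extend n fun k _ => f k) :=
    hP n fun k hk => by simp only [extend, dif_pos (Set.mem_Iio.1 hk)]
  rw [agree, f_eq n]
  exact hnext n _

section Modules

variable {K A B ι : Type*} [Ring K] [AddCommGroup A] [Module K A] [AddCommGroup B] [Module K B]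

theorem exists_forall_map_add_eq_of_dependsOn_Iio [Preorder ι] [WellFoundedLT ι]
    {L : A →ₗ[K] B} {V : ι → Set A} {ℬ : ι → Submodule K B}
    (hLV : ∀ n, Set.SurjOn L (V n) (ℬ n)) {u : ι → A} (hu : ∀ n, L (u n) ∈ ℬ n)
    {c : ι → (ι → A) → B} (hc : ∀ n, DependsOn (c n) (Set.Iio n)) (hcℬ : ∀ n x, c n x ∈ ℬ n) :
    ∃ v : ι → A, (∀ n, v n ∈ V n) ∧ ∀ n, L (u n + v n) = c n (u + v) := by
  suffices h : ∃ v : ι → A, ∀ n, v n ∈ V n ∧ L (v n) = c n (u + v) - L (u n) by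
    obtain ⟨v, hv⟩ := h
    exact ⟨v, fun n => (hv n).1, fun n => by rw [map_add, (hv n).2, add_sub_cancel]⟩
  refine exists_forall_of_dependsOn_Iio (P := fun n v a => a ∈ V n ∧ L a = c n (u + v) - L (u n))
    (fun n v w hvw => ?_) fun n v => hLV n ((ℬ n).sub_mem (hcℬ n _) (hu n))
  have hcvw : c n (u + v) = c n (u + w) := hc n fun k hk => congrArg (u k + ·) (hvw k hk)
  simp only [hcvw]

theorem proj_sum_eq [Fintype ι] {ℬ : ι → Submodule K B} {π : ι → B →ₗ[K] B}
    (hπ_id : ∀ n, ∀ y ∈ ℬ n, π n y = y) (hπ_zero : ∀ n m, n ≠ m → ∀ y ∈ ℬ m, π n y = 0)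
    {b : ι → B} (hb : ∀ k, b k ∈ ℬ k) (n : ι) : π n (∑ k, b k) = b n := by
  rw [map_sum, Fintype.sum_eq_single n fun k hk => hπ_zero n k hk.symm _ (hb k), hπ_id n _ (hb n)]

section Triangular

variable [Preorder ι] [DecidableLT ι] [Fintype ι]
  {𝒜 : ι → Submodule K A} {ℬ : ι → Submodule K B} {π : ι → B →ₗ[K] B}
  {T : A → B} {Tstar : A →ₗ[K] B} {R : A → B} {z : A}

theorem map_add_sum_eq_of_forall_map_eq_proj (hπ_id : ∀ n, ∀ y ∈ ℬ n, π n y = y)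
    (hπ_zero : ∀ n m, n ≠ m → ∀ y ∈ ℬ m, π n y = 0) (hπ_sum : ∀ y, y = ∑ n, π n y)
    (hR : ∀ x, R x = T x - Tstar x) (hz : Tstar z = 0)
    {x : ι → A} (hTstar : ∀ n, Tstar (x n) ∈ ℬ n)
    (hR_proj : ∀ n, π n (R (z + ∑ k, x k)) = π n (R (z + ∑ k with k < n, x k)))
    {y : B} (hx : ∀ n, Tstar (x n) = π n (y - R (z + ∑ k with k < n, x k))) :
    T (z + ∑ k, x k) = y := by
  have hT : T (z + ∑ k, x k) = R (z + ∑ k, x k) + ∑ k, Tstar (x k) := by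
    rw [hR, map_add, hz, zero_add, map_sum, sub_add_cancel]
  have hproj (n : ι) : π n (T (z + ∑ k, x k)) = π n y := calc
    _ = π n (R (z + ∑ k, x k)) + Tstar (x n) := by
      rw [hT, map_add, proj_sum_eq hπ_id hπ_zero hTstar]
    _ = π n (R (z + ∑ k with k < n, x k)) + π n (y - R (z + ∑ k with k < n, x k)) := by
      rw [hR_proj, hx]
    _ = π n y := by rw [← map_add, add_sub_cancel]
  rw [hπ_sum (T _), hπ_sum y]
  exact Finset.sum_congr rfl fun n _ => hproj n

theorem stmt_6_general
    (hπ_mem : ∀ n y, π n y ∈ ℬ n) (hπ_id : ∀ n, ∀ y ∈ ℬ n, π n y = y)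
    (hπ_zero : ∀ n m, n ≠ m → ∀ y ∈ ℬ m, π n y = 0) (hπ_sum : ∀ y, y = ∑ n, π n y)
    (hR : ∀ x, R x = T x - Tstar x) (hTstar : ∀ n, ∀ x ∈ 𝒜 n, Tstar x ∈ ℬ n)
    {V : ι → Set A} (hV : ∀ n, V n ⊆ 𝒜 n) (hTV : ∀ n, Set.SurjOn Tstar (V n) (ℬ n))
    (hz : Tstar z = 0)
    (hR_proj : ∀ x : ι → A, (∀ k, x k ∈ 𝒜 k) →
      ∀ n, π n (R (z + ∑ k, x k)) = π n (R (z + ∑ k with k < n, x k)))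
    {u : ι → A} (hu : ∀ k, u k ∈ 𝒜 k) (y : B) :
    ∃ v : ι → A, (∀ k, v k ∈ V k) ∧ T (z + ∑ k, (u k + v k)) = y := by
  let c (n : ι) (x : ι → A) : B := π n (y - R (z + ∑ k with k < n, x k))
  have hc (n : ι) : DependsOn (c n) (Set.Iio n) := fun x x' hxx' => by
    have hsum : ∑ k with k < n, x k = ∑ k with k < n, x' k :=
      Finset.sum_congr rfl fun k hk => hxx' k (Finset.mem_filter.1 hk).2
    simp only [c, hsum]
  obtain ⟨v, hv, hsolves⟩ := exists_forall_map_add_eq_of_dependsOn_Iio hTV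
    (fun n => hTstar n _ (hu n)) hc fun n _ => hπ_mem n _
  have hx (k : ι) : u k + v k ∈ 𝒜 k := (𝒜 k).add_mem (hu k) (hV k (hv k))
  exact ⟨v, hv, map_add_sum_eq_of_forall_map_eq_proj hπ_id hπ_zero hπ_sum hR hz
    (fun k => hTstar k _ (hx k)) (hR_proj _ hx) hsolves⟩

end Triangular

end Modules

/-- Existence of counterimages with prescribed free components:
under the hypotheses of the algorithmic theorem, for every `y ∈ B`, every `z ∈ F`
and every choice of `uₖ ∈ Uₖ`, there is `x ∈ A` with `T(x) = y` whose `F`-component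
is `z` and whose `Uₖ`-component is `uₖ` (with respect to
`A = F ⊕ (U₀ ⊕ V₀) ⊕ ⋯ ⊕ (U_s ⊕ V_s)`), i.e. `x = z + ∑ₖ (uₖ + vₖ)` with `vₖ ∈ Vₖ`. -/
theorem stmt_6
    {K : Type*} [Field K]
    {A B : Type*} [AddCommGroup A] [Module K A] [AddCommGroup B] [Module K B]
    (s : ℕ)
    (F : Submodule K A) (𝒜 : Fin (s + 1) → Submodule K A)
    (ℬ : Fin (s + 1) → Submodule K B)
    (πF : A →ₗ[K] A) (πA : Fin (s + 1) → A →ₗ[K] A)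
    (πB : Fin (s + 1) → B →ₗ[K] B)
    (hπF_mem : ∀ x : A, πF x ∈ F)
    (hπA_mem : ∀ (n) (x : A), πA n x ∈ 𝒜 n)
    (hπB_mem : ∀ (n) (y : B), πB n y ∈ ℬ n)
    (hπF_id : ∀ x ∈ F, πF x = x)
    (hπA_id : ∀ n, ∀ x ∈ 𝒜 n, πA n x = x)
    (hπB_id : ∀ n, ∀ y ∈ ℬ n, πB n y = y)
    (hπF_zero : ∀ n, ∀ x ∈ 𝒜 n, πF x = 0)
    (hπA_zeroF : ∀ n, ∀ x ∈ F, πA n x = 0)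
    (hπA_zero : ∀ n m, n ≠ m → ∀ x ∈ 𝒜 m, πA n x = 0)
    (hπB_zero : ∀ n m, n ≠ m → ∀ y ∈ ℬ m, πB n y = 0)
    (hA_decomp : ∀ x : A, x = πF x + ∑ n, πA n x)
    (hB_decomp : ∀ y : B, y = ∑ n, πB n y)
    -- the maps
    (T : A → B) (Tstar : A →ₗ[K] B) (R : A → B)
    (hR : ∀ x, R x = T x - Tstar x)
    (hT1 : ∀ n, ∀ x ∈ 𝒜 n, Tstar x ∈ ℬ n)
    (hR1 : ∀ n : Fin (s + 1), (n : ℕ) < s →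
      ∀ x ∈ (⨆ k ≥ n, 𝒜 k : Submodule K A), R x ∈ (⨆ k > n, ℬ k : Submodule K B))
    (hR2 : ∀ x ∈ 𝒜 (Fin.last s), R x = 0)
    (hTF : ∀ x ∈ F, Tstar x = 0)
    -- the internal splittings `Aₙ = Uₙ ⊕ Vₙ`
    (𝒰 𝒱 : Fin (s + 1) → Submodule K A)
    (hUV_sup : ∀ n, 𝒰 n ⊔ 𝒱 n = 𝒜 n)
    (hUV_inf : ∀ n, 𝒰 n ⊓ 𝒱 n = ⊥)
    -- `T⋆|_{Vₙ}` is a (linear) bijection from `Vₙ` onto `Bₙ`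
    (hTV : ∀ n, Set.BijOn Tstar (𝒱 n : Set A) (ℬ n : Set B))
    -- projection property of `R` with respect to an `F`-component
    (hR4 : ∀ (z : A), z ∈ F → ∀ xk : Fin (s + 1) → A, (∀ k, xk k ∈ 𝒜 k) →
      πB 0 (R (z + ∑ k, xk k)) = πB 0 (R z) ∧
      ∀ n : Fin (s + 1), 0 < n →
        πB n (R (z + ∑ k, xk k)) =
          πB n (R (z + ∑ k ∈ Finset.univ.filter (fun k => k < n), xk k))) :
    ∀ y : B, ∀ z ∈ F, ∀ u : Fin (s + 1) → A, (∀ k, u k ∈ 𝒰 k) →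
      ∃ v : Fin (s + 1) → A, (∀ k, v k ∈ 𝒱 k) ∧
        T (z + ∑ k, (u k + v k)) = y := by
  intro y z hz u hu
  have hUA (k) : 𝒰 k ≤ 𝒜 k := hUV_sup k ▸ le_sup_left
  have hVA (k) : 𝒱 k ≤ 𝒜 k := hUV_sup k ▸ le_sup_right
  refine stmt_6_general hπB_mem hπB_id hπB_zero hB_decomp hR hT1 hVA (fun n => (hTV n).surjOn)
    (hTF z hz) (fun x hx n => ?_) (fun k => hUA k (hu k)) y
  rcases eq_or_ne n 0 with rfl | hn
  · simpa using (hR4 z hz x hx).1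
  · exact (hR4 z hz x hx).2 n (Fin.pos_iff_ne_zero.2 hn)
end

section
/- Let K be a field of characteristic zero, d ≥ 1, and for each multi-index j ∈ ℕ^d with |j| = 2 let c_j ∈ K. Define the linear operator L_* on polynomials in d variables over K by L_*(P) = Σ_{|j|=2} c_j ∂^j P, where ∂^j denotes the corresponding iterated formal partial derivative. Suppose there exists k ∈ {1,...,d} such that c_{2e_k} ≠ 0, where 2e_k is the multi-index with k-th entry 2 and all other entries 0. Then for every n ∈ ℕ, L_* maps the space of homogeneous polynomials of degree n+2 onto the space of homogeneous polynomials of degree n; that is, every homogeneous polynomial of degree n equals L_*(Q) for some homogeneous polynomial Q of degree n+2. -/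
/-- The iterated formal partial derivative `∂^j = ∂₁^{j₁} ∘ ⋯ ∘ ∂_d^{j_d}`
associated with a multi-index `j : Fin d →₀ ℕ`. -/
noncomputable def iterPDeriv {K : Type*} [CommSemiring K] {d : ℕ} (j : Fin d →₀ ℕ) :
    MvPolynomial (Fin d) K → MvPolynomial (Fin d) K :=
  (List.ofFn fun i : Fin d => (fun P => MvPolynomial.pderiv i P)^[j i]).foldr (· ∘ ·) id

/-- The (finite) set of multi-indices `j ∈ ℕ^d` with `|j| = 2`: every such `j` is of the
form `e_i + e_l` for a pair `(i, l)`. -/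
noncomputable def degTwoIndices (d : ℕ) : Finset (Fin d →₀ ℕ) :=
  (Finset.univ : Finset (Fin d × Fin d)).image fun il =>
    Finsupp.single il.1 1 + Finsupp.single il.2 1

/-- The second-order constant-coefficient operator `L⋆ P = ∑_{|j|=2} c_j ∂^j P`. -/
noncomputable def Lstar {K : Type*} [CommSemiring K] {d : ℕ} (c : (Fin d →₀ ℕ) → K)
    (P : MvPolynomial (Fin d) K) : MvPolynomial (Fin d) K :=
  ∑ j ∈ degTwoIndices d, c j • iterPDeriv j P

/-!
Let `j₀` be the lexicographically least multi-index with `c_{j₀} ≠ 0`. Applied to `x^(m + j₀)`,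
the operator `∑ c_j ∂^j` yields a nonzero multiple of `x^m`, because the characteristic is zero,
plus multiples of the monomials `x^(m + j₀ - j)` with `j > j₀`. If all `j` have the same degree,
these have the degree of `x^m`, and they are lexicographically smaller than it. As the
lexicographic order on multi-indices is a well-order, every `x^m` lies in the range by induction.
-/

open MvPolynomial

section PDeriv

variable {σ R : Type*} [CommSemiring R]

lemma toLinearMap_pderiv_pow_monomial (i : σ) (r : ℕ) (m : σ →₀ ℕ) (a : R) :
    ((pderiv i).toLinearMap ^ r : Module.End R (MvPolynomial σ R)) (monomial m a) =
      monomial (m - Finsupp.single i r) (a * ((m i).descFactorial r : R)) := by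
  induction r with
  | zero => simp
  | succ r ih =>
    rw [pow_succ', Module.End.mul_apply, ih, Derivation.coeFn_coe,
      pderiv_monomial, tsub_tsub, ← Finsupp.single_add]
    congr 1
    rw [Finsupp.tsub_apply, Finsupp.single_eq_same, Nat.descFactorial_succ]
    push_cast
    ring

lemma list_prod_pderiv_pow_monomial [DecidableEq σ] (j m : σ →₀ ℕ) (a : R) {l : List σ}
    (hl : l.Nodup) :
    (l.map fun i ↦ ((pderiv i).toLinearMap ^ j i : Module.End R (MvPolynomial σ R))).prod
        (monomial m a) =
      monomial (m - j.filter (· ∈ l))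
        (a * (l.map fun i ↦ ((m i).descFactorial (j i) : R)).prod) := by
  induction l with
  | nil =>
    have filter_nil : j.filter (· ∈ ([] : List σ)) = 0 := by ext; simp
    rw [filter_nil]
    simp only [List.map_nil, List.prod_nil, Module.End.one_apply, tsub_zero, mul_one]
  | cons i l ih =>
    obtain ⟨hi, hl⟩ := List.nodup_cons.mp hl
    have filter_cons : j.filter (· ∈ i :: l) = j.filter (· ∈ l) + Finsupp.single i (j i) := by
      ext x
      by_cases hx : x = i <;> simp [Finsupp.filter_apply, hx, hi]
    have sub_filter_apply : (m - j.filter (· ∈ l)) i = m i := by simp [hi]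
    rw [List.map_cons, List.prod_cons, Module.End.mul_apply, ih hl,
      toLinearMap_pderiv_pow_monomial, sub_filter_apply, tsub_tsub, ← filter_cons, List.map_cons,
      List.prod_cons, mul_assoc, mul_comm (List.prod _)]

end PDeriv

lemma prod_descFactorial_ne_zero_iff {σ : Type*} [Fintype σ] {j m : σ →₀ ℕ} :
    ∏ i, (m i).descFactorial (j i) ≠ 0 ↔ j ≤ m := by
  simp [Finset.prod_ne_zero_iff, Nat.descFactorial_eq_zero_iff_lt, Finsupp.le_def]

section IterPDeriv

variable {K : Type*} [CommSemiring K] {d : ℕ}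

/-- `∂^j` as an endomorphism of the `K`-module of polynomials, so that `iterPDeriv j` can be
handled through the linear-map API. -/
noncomputable def iterPDerivLinear (j : Fin d →₀ ℕ) : Module.End K (MvPolynomial (Fin d) K) :=
  ((List.finRange d).map fun i ↦ (pderiv i).toLinearMap ^ j i).prod

lemma iterPDerivLinear_apply (j : Fin d →₀ ℕ) (P : MvPolynomial (Fin d) K) :
    iterPDerivLinear j P = iterPDeriv j P := by
  rw [iterPDerivLinear, iterPDeriv, List.ofFn_eq_map]
  induction List.finRange d with
  | nil => rfl
  | cons i l ih =>
    rw [List.map_cons, List.prod_cons, Module.End.mul_apply, ih, Module.End.pow_apply]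
    rfl

lemma iterPDeriv_monomial (j m : Fin d →₀ ℕ) (a : K) :
    iterPDeriv j (monomial m a) =
      monomial (m - j) (a * ((∏ i, (m i).descFactorial (j i) : ℕ) : K)) := by
  have filter_finRange : j.filter (· ∈ List.finRange d) = j :=
    Finsupp.filter_eq_self_iff _ _ |>.mpr fun i _ ↦ List.mem_finRange i
  rw [← iterPDerivLinear_apply, iterPDerivLinear,
    list_prod_pderiv_pow_monomial j m a (List.nodup_finRange d), filter_finRange,
    ← List.ofFn_eq_map, List.prod_ofFn, Nat.cast_prod]

lemma iterPDeriv_monomial_of_not_le {j m : Fin d →₀ ℕ} (h : ¬j ≤ m) (a : K) :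
    iterPDeriv j (monomial m a) = 0 := by
  have prod_eq_zero : ∏ i, (m i).descFactorial (j i) = 0 := by
    rwa [← not_ne_iff, prod_descFactorial_ne_zero_iff]
  rw [iterPDeriv_monomial, prod_eq_zero, Nat.cast_zero, mul_zero, monomial_zero]

/-- The constant-coefficient differential operator `∑_{j ∈ J} c_j ∂^j` as a linear map. Its order
is arbitrary: `J` is any finite set of multi-indices. -/
noncomputable def constCoeffDiffOp (J : Finset (Fin d →₀ ℕ)) (c : (Fin d →₀ ℕ) → K) :
    Module.End K (MvPolynomial (Fin d) K) :=
  ∑ j ∈ J, c j • iterPDerivLinear j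

lemma constCoeffDiffOp_apply (J : Finset (Fin d →₀ ℕ)) (c : (Fin d →₀ ℕ) → K)
    (P : MvPolynomial (Fin d) K) :
    constCoeffDiffOp J c P = ∑ j ∈ J, c j • iterPDeriv j P := by
  simp [constCoeffDiffOp, LinearMap.sum_apply, iterPDerivLinear_apply]

end IterPDeriv

lemma toLex_add_tsub_lt {σ : Type*} [LinearOrder σ] {i j m : σ →₀ ℕ}
    (hij : toLex i < toLex j) (hj : j ≤ m + i) : toLex (m + i - j) < toLex m := by
  refine lt_of_add_lt_add_right (a := toLex j) ?_
  rw [← toLex_add, tsub_add_cancel_of_le hj, toLex_add]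
  exact add_lt_add_right hij _

lemma degree_add_tsub {σ : Type*} {i j m : σ →₀ ℕ} (hij : i.degree = j.degree)
    (hj : j ≤ m + i) : (m + i - j).degree = m.degree := by
  apply Nat.add_right_cancel (m := j.degree)
  rw [← map_add, tsub_add_cancel_of_le hj, map_add, hij]

section Field

variable {K : Type*} [Field K] [CharZero K] {d r : ℕ} {J : Finset (Fin d →₀ ℕ)}
  {c : (Fin d →₀ ℕ) → K}

lemma exists_smul_iterPDeriv_monomial_add_eq {x : K} (hx : x ≠ 0) (j m : Fin d →₀ ℕ) (a : K) :
    ∃ b : K, x • iterPDeriv j (monomial (m + j) b) = monomial m a := by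
  have hD : ((∏ i, ((m + j) i).descFactorial (j i) : ℕ) : K) ≠ 0 :=
    Nat.cast_ne_zero.mpr (prod_descFactorial_ne_zero_iff.mpr le_add_self)
  refine ⟨a / (x * (∏ i, ((m + j) i).descFactorial (j i) : ℕ)), ?_⟩
  rw [iterPDeriv_monomial, smul_monomial, add_tsub_cancel_right, smul_eq_mul]
  congr 1
  field_simp

lemma monomial_mem_map_constCoeffDiffOp (hJ : ∀ j ∈ J, j.degree = r) {j₀ : Fin d →₀ ℕ}
    (hj₀ : j₀ ∈ J) (hc : c j₀ ≠ 0) (hmin : ∀ j ∈ J, c j ≠ 0 → toLex j₀ ≤ toLex j)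
    (m : Fin d →₀ ℕ) (a : K) :
    monomial m a ∈
      (homogeneousSubmodule (Fin d) K (m.degree + r)).map (constCoeffDiffOp J c) := by
  induction hm : toLex m using WellFoundedLT.induction generalizing m a with
  | ind x ih =>
  subst hm
  set W := (homogeneousSubmodule (Fin d) K (m.degree + r)).map (constCoeffDiffOp J c)
  obtain ⟨b, hb⟩ := exists_smul_iterPDeriv_monomial_add_eq hc j₀ m a
  have degree_add : (m + j₀).degree = m.degree + r := by rw [map_add, hJ j₀ hj₀]
  have image_mem : constCoeffDiffOp J c (monomial (m + j₀) b) ∈ W :=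
    Submodule.mem_map_of_mem (isHomogeneous_monomial b degree_add)
  rw [constCoeffDiffOp_apply, ← Finset.add_sum_erase _ _ hj₀, hb] at image_mem
  refine (W.add_mem_iff_left (W.sum_mem fun j hj ↦ ?_)).mp image_mem
  obtain ⟨hne, hjJ⟩ := Finset.mem_erase.mp hj
  by_cases hcj : c j = 0
  · rw [hcj, zero_smul]
    exact W.zero_mem
  refine W.smul_mem _ ?_
  by_cases hle : j ≤ m + j₀
  · have hlt : toLex j₀ < toLex j :=
      (hmin j hjJ hcj).lt_of_ne fun h ↦ hne (toLex.injective h).symm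
    rw [iterPDeriv_monomial]
    have mem_map := ih _ (toLex_add_tsub_lt hlt hle) _
      (b * ((∏ i, ((m + j₀) i).descFactorial (j i) : ℕ) : K)) rfl
    rwa [degree_add_tsub ((hJ j₀ hj₀).trans (hJ j hjJ).symm) hle] at mem_map
  · rw [iterPDeriv_monomial_of_not_le hle]
    exact W.zero_mem

end Field

theorem stmt_7_general {K : Type*} [Field K] [CharZero K] {d r : ℕ} {J : Finset (Fin d →₀ ℕ)}
    (hJ : ∀ j ∈ J, j.degree = r) (c : (Fin d →₀ ℕ) → K) (hc : ∃ j ∈ J, c j ≠ 0) (n : ℕ) :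
    ∀ Q ∈ homogeneousSubmodule (Fin d) K n,
      ∃ P ∈ homogeneousSubmodule (Fin d) K (n + r), ∑ j ∈ J, c j • iterPDeriv j P = Q := by
  classical
  obtain ⟨j₀, hj₀, hmin⟩ := (J.filter (c · ≠ 0)).exists_min_image toLex
    (by simpa only [Finset.filter_nonempty_iff] using hc)
  rw [Finset.mem_filter] at hj₀
  intro Q hQ
  have monomial_mem (m) (hm : m ∈ Q.support) : monomial m (Q.coeff m) ∈
      (homogeneousSubmodule (Fin d) K (n + r)).map (constCoeffDiffOp J c) := by
    have degree_eq : m.degree = n :=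
      of_not_not fun h ↦ mem_support_iff.mp hm (IsHomogeneous.coeff_eq_zero hQ h)
    exact degree_eq ▸ monomial_mem_map_constCoeffDiffOp hJ hj₀.1 hj₀.2
      (fun j hj hcj ↦ hmin j (Finset.mem_filter.mpr ⟨hj, hcj⟩)) m _
  obtain ⟨P, hP, hPQ⟩ := Submodule.sum_mem _ monomial_mem
  exact ⟨P, hP, by rw [← constCoeffDiffOp_apply, hPQ, ← Q.as_sum]⟩

lemma mem_degTwoIndices {d : ℕ} {j : Fin d →₀ ℕ} : j ∈ degTwoIndices d ↔ j.degree = 2 := by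
  simp only [degTwoIndices, Finset.mem_image, Finset.mem_univ, true_and, Prod.exists]
  constructor
  · rintro ⟨i, l, rfl⟩
    simp
  · intro hj
    obtain ⟨i, l, hil⟩ := Multiset.card_eq_two.mp
      (show j.toMultiset.card = 2 by rwa [Finsupp.card_toMultiset])
    exact ⟨i, l, Multiset.toFinsupp.symm.injective (by simp [hil])⟩

/-- If `char K = 0` and some coefficient `c_{2 e_k}` is nonzero, then
`L⋆` maps homogeneous polynomials of degree `n + 2` onto homogeneous polynomials of
degree `n`, for every `n`. -/
theorem stmt_7 {K : Type*} [Field K] [CharZero K] {d : ℕ} (hd : 1 ≤ d)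
    (c : (Fin d →₀ ℕ) → K)
    (hc : ∃ k : Fin d, c (Finsupp.single k 2) ≠ 0) :
    ∀ n : ℕ, ∀ Q ∈ MvPolynomial.homogeneousSubmodule (Fin d) K n,
      ∃ P ∈ MvPolynomial.homogeneousSubmodule (Fin d) K (n + 2), Lstar c P = Q := by
  obtain ⟨k, hk⟩ := hc
  exact stmt_7_general (fun _ ↦ mem_degTwoIndices.mp) c
    ⟨Finsupp.single k 2, mem_degTwoIndices.mpr (Finsupp.degree_single k 2), hk⟩
end

section
/- Let K be a field of characteristic zero, d ≥ 1, and for each multi-index j ∈ ℕ^d with |j| = 2 let c_j ∈ K. Define the linear operator L_* on polynomials in d variables over K by L_*(P) = Σ_{|j|=2} c_j ∂^j P. Suppose there exists k ∈ {1,...,d} such that c_{2e_k} ≠ 0, where 2e_k is the multi-index with k-th entry 2 and all other entries 0. For n ∈ ℕ, let V_n be the linear span of the monomials X^j with |j| = n+2 and j_k ≥ 2. Then the restriction of L_* to V_n is a linear bijection from V_n onto the space of homogeneous polynomials of degree n. -/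
/-!
A constant-coefficient operator `L = ∑_{|j|=m} c_j ∂^j` sends `X^(s + m e_k)` to
`(s_k + 1) ⋯ (s_k + m) c_{m e_k} X^s` plus a combination of monomials `X^(s + m e_k - j)` with
`j ≠ m e_k`. For those `j` one has `j_k < m`, so the exponent of `X_k` in each of the extra terms
exceeds `s_k`. Thus `L` is triangular for the ordering of the monomials by the exponent of `X_k`,
and its diagonal is invertible: if `|s| = n`, then `(s_k + 1) ⋯ (s_k + m)` divides `(n + m)!`.
Successive elimination gives surjectivity, and injectivity follows because a surjective
endomorphism of a finitely generated module over a commutative ring is injective.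
-/

open MvPolynomial
open scoped Nat Pointwise

section Triangular

variable {R ι M N α : Type*} [Ring R] [Finite ι] [Preorder α]
  [AddCommGroup M] [Module R M] [AddCommGroup N] [Module R N]

theorem surjective_of_triangular (b : ι → M) (b' : Module.Basis ι R N) (f : M →ₗ[R] N)
    (h : ι → α)
    (hdiag : ∀ i, IsUnit (b'.repr (f (b i)) i))
    (hoff : ∀ i j, j ≠ i → b'.repr (f (b i)) j ≠ 0 → h i < h j) :
    Function.Surjective f := by
  classical
  have := Fintype.ofFinite ι
  let : Preorder ι := Preorder.lift h
  have basis_mem (i : ι) : b' i ∈ f.range := by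
    induction i using WellFoundedGT.induction with
    | ind i ih =>
    have off_mem : ∑ j ∈ Finset.univ.erase i, b'.repr (f (b i)) j • b' j ∈ f.range := by
      refine Submodule.sum_mem _ fun j hj => ?_
      by_cases hij : b'.repr (f (b i)) j = 0
      · simp [hij]
      · exact Submodule.smul_mem _ _ (ih j (hoff i j (Finset.ne_of_mem_erase hj) hij))
    have expansion := b'.sum_repr (f (b i))
    rw [← Finset.add_sum_erase _ _ (Finset.mem_univ i)] at expansion
    rw [← Submodule.smul_mem_iff_of_isUnit _ (hdiag i), eq_sub_of_add_eq expansion]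
    exact Submodule.sub_mem _ (LinearMap.mem_range_self f (b i)) off_mem
  rw [← LinearMap.range_eq_top, eq_top_iff, ← b'.span_eq, Submodule.span_le]
  exact Set.range_subset_iff.2 basis_mem

theorem bijective_of_triangular [OrzechProperty R] (b : Module.Basis ι R M)
    (b' : Module.Basis ι R N) (f : M →ₗ[R] N) (h : ι → α)
    (hdiag : ∀ i, IsUnit (b'.repr (f (b i)) i))
    (hoff : ∀ i j, j ≠ i → b'.repr (f (b i)) j ≠ 0 → h i < h j) :
    Function.Bijective f := by
  have := Module.Finite.of_basis b'
  have hf := surjective_of_triangular b b' f h hdiag hoff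
  exact ⟨OrzechProperty.injective_of_surjective_of_injective
    (b.equiv b' (Equiv.refl ι)).toLinearMap f (LinearEquiv.injective _) hf, hf⟩

end Triangular

section RestrictSupport

theorem basisRestrictSupport_repr {R σ : Type*} [CommSemiring R] (S : Set (σ →₀ ℕ))
    (P : restrictSupport R S) (s : S) :
    (basisRestrictSupport R S).repr P s = coeff s.1 (P : MvPolynomial σ R) := rfl

theorem coe_basisRestrictSupport {R σ : Type*} [CommSemiring R] (S : Set (σ →₀ ℕ)) (s : S) :
    (basisRestrictSupport R S s : MvPolynomial σ R) = monomial s.1 1 := by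
  classical
  suffices basisRestrictSupport R S s =
      ⟨monomial s.1 1, (monomial_mem_restrictSupport R).2 (Or.inl s.2)⟩ from
    congrArg Subtype.val this
  apply (basisRestrictSupport R S).repr.injective
  ext t
  rw [Module.Basis.repr_self, basisRestrictSupport_repr, coeff_monomial, Finsupp.single_apply]
  simp only [Subtype.ext_iff]

theorem homogeneousSubmodule_eq_restrictSupport (σ R : Type*) [CommSemiring R] (n : ℕ) :
    homogeneousSubmodule σ R n = restrictSupport R {s | s.degree = n} :=
  homogeneousSubmodule_eq_finsupp_supported σ R n

theorem apply_lt_degree_of_ne_single {σ : Type*} {j : σ →₀ ℕ} {k : σ}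
    (hj : j ≠ Finsupp.single k j.degree) : j k < j.degree := by
  refine (Finsupp.le_degree k j).lt_of_ne fun hk => hj ?_
  have hrest : (j.erase k).degree = 0 := by
    have hadd := congrArg Finsupp.degree (Finsupp.single_add_erase k j)
    rw [map_add, Finsupp.degree_single, hk] at hadd
    exact Nat.add_eq_left.1 hadd
  rw [← hk, ← Finsupp.single_add_erase k j, (Finsupp.degree_eq_zero_iff _).1 hrest]
  simp

theorem image_add_single_degree_eq {σ : Type*} (k : σ) (m n : ℕ) :
    (· + Finsupp.single k m) '' {s : σ →₀ ℕ | s.degree = n} =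
      {j | j.degree = n + m ∧ m ≤ j k} := by
  ext j
  constructor
  · rintro ⟨s, hs, rfl⟩
    simp_all
  · rintro ⟨hdeg, hk⟩
    have hj : j - Finsupp.single k m + Finsupp.single k m = j :=
      tsub_add_cancel_of_le (Finsupp.single_le_iff.2 hk)
    refine ⟨j - Finsupp.single k m, ?_, hj⟩
    have hdeg' := congrArg Finsupp.degree hj
    rw [map_add, Finsupp.degree_single, hdeg] at hdeg'
    exact Nat.add_right_cancel hdeg'

theorem span_monomial_degree_eq_restrictSupport (R : Type*) [CommSemiring R] {σ : Type*} (k : σ)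
    (m n : ℕ) :
    Submodule.span R {P : MvPolynomial σ R |
      ∃ j : σ →₀ ℕ, (j.sum fun _ e => e) = n + m ∧ m ≤ j k ∧ P = monomial j 1} =
      restrictSupport R ((· + Finsupp.single k m) '' {s : σ →₀ ℕ | s.degree = n}) := by
  rw [image_add_single_degree_eq, restrictSupport_eq_span]
  congr 1
  ext P
  simp only [Set.mem_ofPred_eq, Set.mem_image, and_assoc, eq_comm (a := P)]
  rfl

theorem bijOn_restrictSupport_of_triangular {R σ τ α : Type*} [CommRing R] [Preorder α]
    (L : MvPolynomial σ R →ₗ[R] MvPolynomial τ R) {S : Set (τ →₀ ℕ)} (hS : S.Finite)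
    {e : (τ →₀ ℕ) → (σ →₀ ℕ)} (he : S.InjOn e) (h : (τ →₀ ℕ) → α)
    (hL : ∀ P ∈ restrictSupport R (e '' S), L P ∈ restrictSupport R S)
    (hdiag : ∀ s ∈ S, IsUnit (coeff s (L (monomial (e s) 1))))
    (hoff : ∀ s ∈ S, ∀ t, t ≠ s → coeff t (L (monomial (e s) 1)) ≠ 0 → h s < h t) :
    Set.BijOn L (restrictSupport R (e '' S)) (restrictSupport R S) := by
  have := hS.to_subtype
  let b := (basisRestrictSupport R (e '' S)).reindex (Equiv.Set.imageOfInjOn e S he).symm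
  have coe_b (s : S) : (b s : MvPolynomial σ R) = monomial (e s) 1 := by
    simp only [b, Module.Basis.reindex_apply, Equiv.symm_symm, coe_basisRestrictSupport]
    rfl
  have bij : Function.Bijective (L.restrict hL) := by
    refine bijective_of_triangular b (basisRestrictSupport R S) _ (fun s => h s)
      (fun s => ?_) (fun s t hts hst => ?_)
    · simpa only [basisRestrictSupport_repr, LinearMap.coe_restrict_apply, coe_b]
        using hdiag s s.2
    · rw [basisRestrictSupport_repr, LinearMap.coe_restrict_apply, coe_b] at hst
      exact hoff s s.2 t (Subtype.coe_ne_coe.2 hts) hst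
  have mapsTo : Set.MapsTo L (restrictSupport R (e '' S)) (restrictSupport R S) := hL
  exact ⟨mapsTo, mapsTo.restrict_inj.1 bij.injective,
    mapsTo.restrict_surjective_iff.1 bij.surjective⟩

end RestrictSupport

section Coefficients

variable {R : Type*} [CommSemiring R]

theorem isUnit_ascFactorial_of_isUnit_factorial {a n m : ℕ}
    (h : IsUnit ((n + m)! : R)) (ha : a ≤ n) : IsUnit ((a + 1).ascFactorial m : R) := by
  have hdvd : (a + 1).ascFactorial m ∣ (n + m)! :=
    (Dvd.intro_left _ (Nat.factorial_mul_ascFactorial a m)).trans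
      (Nat.factorial_dvd_factorial (Nat.add_le_add_right ha m))
  exact isUnit_of_dvd_unit (Nat.cast_dvd_cast hdvd) h

theorem coeff_iterate_pderiv {σ : Type*} (i : σ) (t : ℕ) (s : σ →₀ ℕ) (P : MvPolynomial σ R) :
    coeff s ((fun Q => pderiv i Q)^[t] P) =
      (s i + 1).ascFactorial t * coeff (s + Finsupp.single i t) P := by
  induction t generalizing P with
  | zero => simp
  | succ t ih =>
    rw [Function.iterate_succ_apply, ih, coeff_pderiv, add_assoc, ← Finsupp.single_add,
      Nat.ascFactorial_succ, Finsupp.add_apply, Finsupp.single_eq_same]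
    push_cast
    ring

theorem coeff_foldr_iterate_pderiv {σ : Type*} (j : σ → ℕ) {l : List σ} (hl : l.Nodup)
    (s : σ →₀ ℕ) (P : MvPolynomial σ R) :
    coeff s ((l.map fun i => (fun Q : MvPolynomial σ R => pderiv i Q)^[j i]).foldr (· ∘ ·) id P) =
      (l.map fun i => (s i + 1).ascFactorial (j i)).prod *
        coeff (s + (l.map fun i => Finsupp.single i (j i)).sum) P := by
  induction l generalizing s with
  | nil => simp
  | cons i l ih =>
    obtain ⟨hi, hl⟩ := List.nodup_cons.1 hl
    have apply_eq : ∀ i' ∈ l, (s + Finsupp.single i (j i)) i' = s i' := fun i' hi' => by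
      simp [ne_of_mem_of_not_mem hi' hi]
    have weights_eq : (l.map fun i' =>
          ((s + Finsupp.single i (j i)) i' + 1).ascFactorial (j i')) =
        l.map fun i' => (s i' + 1).ascFactorial (j i') :=
      List.map_congr_left fun i' hi' => by rw [apply_eq i' hi']
    simp only [List.map_cons, List.foldr_cons, Function.comp_apply, coeff_iterate_pderiv, ih hl,
      weights_eq, List.prod_cons, List.sum_cons, Nat.cast_mul, mul_assoc, add_assoc]

variable {d : ℕ}

theorem coeff_iterPDeriv (j s : Fin d →₀ ℕ) (P : MvPolynomial (Fin d) R) :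
    coeff s (iterPDeriv j P) = (∏ i, (s i + 1).ascFactorial (j i) : ℕ) * coeff (s + j) P := by
  rw [iterPDeriv, List.ofFn_eq_map, coeff_foldr_iterate_pderiv j (List.nodup_finRange d),
    ← List.ofFn_eq_map, ← List.ofFn_eq_map, List.prod_ofFn, List.sum_ofFn,
    Finsupp.univ_sum_single]

/-- The homogeneous constant-coefficient differential operator `∑_{|j|=m} c_j ∂^j` of order `m`,
as a linear map; the case `m = 2` is `Lstar c`. -/
noncomputable def homogDiffOp (m : ℕ) (c : (Fin d →₀ ℕ) → R) :
    MvPolynomial (Fin d) R →ₗ[R] MvPolynomial (Fin d) R where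
  toFun P := ∑ j ∈ Finset.univ.finsuppAntidiag m, c j • iterPDeriv j P
  map_add' P Q := by
    ext s
    simp only [coeff_sum, coeff_add, coeff_smul, coeff_iterPDeriv, smul_add, mul_add,
      Finset.sum_add_distrib]
  map_smul' a P := by
    ext s
    simp only [coeff_sum, coeff_smul, coeff_iterPDeriv, smul_eq_mul, RingHom.id_apply,
      Finset.mul_sum, mul_left_comm a]

theorem mem_univ_finsuppAntidiag {σ : Type*} [Fintype σ] [DecidableEq σ] {m : ℕ} {j : σ →₀ ℕ} :
    j ∈ Finset.univ.finsuppAntidiag m ↔ j.degree = m := by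
  simp [Finset.mem_finsuppAntidiag, Finsupp.degree_eq_sum]

variable {m : ℕ} (c : (Fin d →₀ ℕ) → R)

theorem coeff_homogDiffOp (s : Fin d →₀ ℕ) (P : MvPolynomial (Fin d) R) :
    coeff s (homogDiffOp m c P) = ∑ j ∈ Finset.univ.finsuppAntidiag m,
      c j * ((∏ i, (s i + 1).ascFactorial (j i) : ℕ) * coeff (s + j) P) := by
  simp only [homogDiffOp, LinearMap.coe_mk, AddHom.coe_mk, coeff_sum, coeff_smul,
    coeff_iterPDeriv, smul_eq_mul]

theorem exists_coeff_add_ne_zero_of_coeff_homogDiffOp_ne_zero {s : Fin d →₀ ℕ}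
    {P : MvPolynomial (Fin d) R} (hs : coeff s (homogDiffOp m c P) ≠ 0) :
    ∃ j : Fin d →₀ ℕ, j.degree = m ∧ coeff (s + j) P ≠ 0 := by
  rw [coeff_homogDiffOp] at hs
  obtain ⟨j, hj, hne⟩ := Finset.exists_ne_zero_of_sum_ne_zero hs
  exact ⟨j, mem_univ_finsuppAntidiag.1 hj, right_ne_zero_of_mul (right_ne_zero_of_mul hne)⟩

theorem homogDiffOp_mem_restrictSupport_degree {n : ℕ} {P : MvPolynomial (Fin d) R}
    (hP : P ∈ restrictSupport R {s | s.degree = n + m}) :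
    homogDiffOp m c P ∈ restrictSupport R {s | s.degree = n} := by
  intro s hs
  obtain ⟨j, hj, hne⟩ :=
    exists_coeff_add_ne_zero_of_coeff_homogDiffOp_ne_zero c (mem_support_iff.1 hs)
  have hdeg : (s + j).degree = n + m := hP (mem_support_iff.2 hne)
  rw [map_add, hj] at hdeg
  exact Nat.add_right_cancel hdeg

theorem coeff_homogDiffOp_monomial_add_single (k : Fin d) (s : Fin d →₀ ℕ) :
    coeff s (homogDiffOp m c (monomial (s + Finsupp.single k m) 1)) =
      c (Finsupp.single k m) * (s k + 1).ascFactorial m := by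
  rw [coeff_homogDiffOp, Finset.sum_eq_single_of_mem (Finsupp.single k m)
    (mem_univ_finsuppAntidiag.2 (Finsupp.degree_single k m))]
  · rw [coeff_monomial, if_pos rfl, mul_one, Finset.prod_eq_single_of_mem k (Finset.mem_univ k),
      Finsupp.single_eq_same]
    intro i _ hik
    rw [Finsupp.single_eq_of_ne hik, Nat.ascFactorial_zero]
  · intro j _ hj
    rw [coeff_monomial, if_neg fun h => hj (add_left_cancel h).symm, mul_zero, mul_zero]

theorem lt_apply_of_coeff_homogDiffOp_monomial_ne_zero {k : Fin d} {s t : Fin d →₀ ℕ}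
    (hts : t ≠ s) (ht : coeff t (homogDiffOp m c (monomial (s + Finsupp.single k m) 1)) ≠ 0) :
    s k < t k := by
  obtain ⟨j, rfl, hne⟩ := exists_coeff_add_ne_zero_of_coeff_homogDiffOp_ne_zero c ht
  have hsum : s + Finsupp.single k j.degree = t + j := by
    by_contra h
    exact hne (by rw [coeff_monomial, if_neg h])
  have hj : j ≠ Finsupp.single k j.degree := fun h =>
    hts (add_right_cancel (hsum.trans (congrArg (t + ·) h))).symm
  have hk := DFunLike.congr_fun hsum k
  rw [Finsupp.add_apply, Finsupp.add_apply, Finsupp.single_eq_same] at hk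
  have := apply_lt_degree_of_ne_single hj
  omega

end Coefficients

theorem stmt_8_general {R : Type*} [CommRing R] {d m : ℕ} (c : (Fin d →₀ ℕ) → R) (k : Fin d)
    (hc : IsUnit (c (Finsupp.single k m))) (n : ℕ) (hfac : IsUnit ((n + m)! : R)) :
    Set.BijOn (homogDiffOp m c)
      (Submodule.span R {P : MvPolynomial (Fin d) R |
        ∃ j : Fin d →₀ ℕ, (j.sum fun _ e => e) = n + m ∧ m ≤ j k ∧ P = monomial j 1})
      (homogeneousSubmodule (Fin d) R n) := by
  have image_subset : (· + Finsupp.single k m) '' {s : Fin d →₀ ℕ | s.degree = n} ⊆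
      {j | j.degree = n + m} :=
    (image_add_single_degree_eq k m n).trans_subset fun j hj => hj.1
  rw [span_monomial_degree_eq_restrictSupport, homogeneousSubmodule_eq_restrictSupport]
  refine bijOn_restrictSupport_of_triangular _ (Finsupp.finite_of_degree_eq n)
    (add_left_injective _).injOn (fun s => s k)
    (fun P hP => homogDiffOp_mem_restrictSupport_degree c (restrictSupport_mono R image_subset hP))
    (fun s hs => ?_)
    (fun s _ t hts ht => lt_apply_of_coeff_homogDiffOp_monomial_ne_zero c hts ht)
  rw [coeff_homogDiffOp_monomial_add_single]
  exact hc.mul (isUnit_ascFactorial_of_isUnit_factorial hfac (hs ▸ Finsupp.le_degree k s))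

theorem degTwoIndices_eq_finsuppAntidiag (d : ℕ) :
    degTwoIndices d = Finset.univ.finsuppAntidiag 2 := by
  ext j
  rw [mem_univ_finsuppAntidiag]
  have degree_eq_two : j.degree = 2 ↔
      j ∈ Set.range (Finsupp.single · 1) + Set.range (Finsupp.single · 1) := by
    rw [Finsupp.range_single_one, ← Set.mem_singleton_iff, show (2 : ℕ) = 1 + 1 from rfl,
      ← Set.singleton_add_singleton]
    exact Set.ext_iff.1 (Finsupp.degree_preimage_add {1} {1}) j
  simp [degree_eq_two, degTwoIndices, Set.mem_add]

theorem Lstar_eq_homogDiffOp {R : Type*} [CommSemiring R] {d : ℕ} (c : (Fin d →₀ ℕ) → R) :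
    Lstar c = homogDiffOp 2 c := by
  ext1 P
  rw [Lstar, degTwoIndices_eq_finsuppAntidiag]
  rfl

/-- If `char K = 0` and `c_{2 e_k} ≠ 0`, then the restriction of `L⋆`
to `V_n`, the span of the monomials `X^j` with `|j| = n + 2` and `j_k ≥ 2`, is a
bijection from `V_n` onto the space of homogeneous polynomials of degree `n`. -/
theorem stmt_8 {K : Type*} [Field K] [CharZero K] {d : ℕ} (hd : 1 ≤ d)
    (c : (Fin d →₀ ℕ) → K) (k : Fin d)
    (hc : c (Finsupp.single k 2) ≠ 0) (n : ℕ) :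
    Set.BijOn (Lstar c)
      ((Submodule.span K {P : MvPolynomial (Fin d) K |
          ∃ j : Fin d →₀ ℕ, (j.sum fun _ e => e) = n + 2 ∧ 2 ≤ j k ∧
            P = MvPolynomial.monomial j (1 : K)}) : Set (MvPolynomial (Fin d) K))
      ((MvPolynomial.homogeneousSubmodule (Fin d) K n) : Set (MvPolynomial (Fin d) K)) := by
  rw [Lstar_eq_homogDiffOp]
  exact stmt_8_general c k hc.isUnit n (Nat.cast_ne_zero.2 (Nat.factorial_ne_zero _)).isUnit
end

section
/- Let d ≥ 1, p ≥ 2 be integers, x0 ∈ ℝ^d, and let g : ℝ^d → ℂ be of class C^{p−2} on an open neighborhood of x0. Then for every a ∈ ℂ and every b ∈ ℂ^d there exists a polynomial P ∈ ℂ[X_1,...,X_d] of total degree at most p with P(x0) = a and ∂_i P(x0) = b_i for all i, such that the function F(x) := ΔP(x) + Σ_{i=1}^d (∂_i P(x))^2 + g(x) satisfies: all iterated derivatives of F of order at most p−2 vanish at x0 (i.e., iteratedFDeriv of order m of F at x0 is zero for every m ∈ {0,...,p−2}). -/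
/-!
Write `R = ΔQ + ∑ (∂ᵢQ)² + G`, where `G` is the Taylor polynomial of `g` and all coordinates are
centred at `x0`; the claim is that `Q` can be chosen so that `R` has no terms of degree `≤ p - 2`.
The terms are removed degree by degree. If `R` starts in degree `n`, then since the Laplacian maps
homogeneous polynomials of degree `n + 2` onto those of degree `n`, some `S` of degree `n + 2` has
`ΔS` equal to the degree-`n` part of `R`. Replacing `Q` by `Q - S` kills this part, because it
changes the nonlinear term `∑ (∂ᵢQ)²` only in degrees `≥ n + 1`.
-/

namespace QuasiTrefftz

open MvPolynomial

section Polynomials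

variable {σ R : Type*} [CommSemiring R]

theorem pderiv_pderiv_monomial (i : σ) (t : σ →₀ ℕ) (r : R) :
    pderiv i (pderiv i (monomial t r)) =
      monomial (t - Finsupp.single i 2) (r * (t i).descFactorial 2) := by
  classical
  simp [pderiv_monomial, tsub_tsub, ← Finsupp.single_add, Nat.descFactorial, mul_assoc, mul_comm]

theorem mem_pow_idealOfVars_of_isHomogeneous {n : ℕ} {Q : MvPolynomial σ R}
    (hQ : Q.IsHomogeneous n) : Q ∈ idealOfVars σ R ^ n :=
  (mem_pow_idealOfVars_iff _ _).2 fun s hs ↦ by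
    rw [Finsupp.degree_eq_weight_one]
    exact (hQ (mem_support_iff.1 hs)).ge

theorem eval_zero_of_mem_idealOfVars {Q : MvPolynomial σ R}
    (hQ : Q ∈ idealOfVars σ R) : eval (fun _ ↦ 0) Q = 0 := by
  have hle : idealOfVars σ R ≤ RingHom.ker (eval fun _ ↦ (0 : R)) :=
    Ideal.span_le.2 (by rintro _ ⟨i, rfl⟩; simp)
  exact hle hQ

end Polynomials

theorem sub_homogeneousComponent_mem_pow_idealOfVars {σ R : Type*} [CommRing R] {n : ℕ}
    {Q : MvPolynomial σ R} (hQ : Q ∈ idealOfVars σ R ^ n) :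
    Q - homogeneousComponent n Q ∈ idealOfVars σ R ^ (n + 1) := by
  rw [mem_pow_idealOfVars_iff'] at hQ ⊢
  intro s hs
  rw [coeff_sub, coeff_homogeneousComponent]
  split_ifs with hsn
  · exact sub_self _
  · rw [hQ s (by lia), sub_zero]

section Laplacian

variable (σ R : Type*) [Fintype σ] [CommSemiring R]

/-- The Laplacian `∑ ∂ᵢ²` on polynomials, as a linear map. -/
noncomputable def laplacian : MvPolynomial σ R →ₗ[R] MvPolynomial σ R :=
  ∑ i, (pderiv i).toLinearMap ∘ₗ (pderiv i).toLinearMap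

variable {σ R}

theorem laplacian_apply (Q : MvPolynomial σ R) : laplacian σ R Q = ∑ i, pderiv i (pderiv i Q) := by
  simp [laplacian]

theorem laplacian_monomial (t : σ →₀ ℕ) (r : R) :
    laplacian σ R (monomial t r) =
      ∑ i, monomial (t - Finsupp.single i 2) (r * (t i).descFactorial 2) := by
  simp only [laplacian_apply, pderiv_pderiv_monomial]

variable {K : Type*} [Field K] [CharZero K]

-- By induction on `n - s i`: in `Δ X^(s + 2eᵢ)` every monomial but `X^s` has a larger exponent
-- at `i`.
theorem monomial_mem_map_laplacian {n : ℕ} (i : σ) {s : σ →₀ ℕ} (hs : s.degree = n) (r : K) :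
    monomial s r ∈ (homogeneousSubmodule σ K (n + 2)).map (laplacian σ K) := by
  classical
  set M := (homogeneousSubmodule σ K (n + 2)).map (laplacian σ K)
  induction hk : n - s i using Nat.strong_induction_on generalizing s r with
  | _ k ih =>
  set t := s + Finsupp.single i 2
  set c : K := Nat.cast ((t i).descFactorial 2)
  have hc : c ≠ 0 := Nat.cast_ne_zero.2 (by simp [t])
  have hother (j : σ) (hj : j ≠ i) :
      monomial (t - Finsupp.single j 2) (r / c * (t j).descFactorial 2) ∈ M := by
    rcases lt_or_ge (t j) 2 with hlt | hle
    · rw [Nat.descFactorial_eq_zero_iff_lt.2 hlt, Nat.cast_zero, mul_zero, map_zero]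
      exact M.zero_mem
    have hdeg : (t - Finsupp.single j 2).degree = n := by
      have hadd := congrArg Finsupp.degree (tsub_add_cancel_of_le (Finsupp.single_le_iff.2 hle))
      simpa [t, hs] using hadd
    have hexp : (t - Finsupp.single j 2 : σ →₀ ℕ) i = s i + 2 := by simp [t, hj]
    have hbound := Finsupp.le_degree i (t - Finsupp.single j 2)
    exact ih _ (by lia) hdeg _ rfl
  have hΔ : laplacian σ K (monomial t (r / c)) ∈ M :=
    Submodule.mem_map_of_mem (isHomogeneous_monomial _ (by simp [t, hs]))
  rw [laplacian_monomial, ← Finset.add_sum_erase _ _ (Finset.mem_univ i), add_tsub_cancel_right,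
    div_mul_cancel₀ r hc] at hΔ
  have hsum := M.sum_mem fun j (hj : j ∈ Finset.univ.erase i) ↦ hother j (Finset.ne_of_mem_erase hj)
  exact (M.add_mem_iff_left hsum).1 hΔ

theorem exists_isHomogeneous_laplacian_eq [Nonempty σ] {n : ℕ} {Q : MvPolynomial σ K}
    (hQ : Q.IsHomogeneous n) : ∃ S, S.IsHomogeneous (n + 2) ∧ laplacian σ K S = Q := by
  suffices hQ : Q ∈ (homogeneousSubmodule σ K (n + 2)).map (laplacian σ K) from hQ
  rw [Q.as_sum]
  refine Submodule.sum_mem _ fun s hs ↦ monomial_mem_map_laplacian (Classical.arbitrary σ) ?_ _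
  rw [Finsupp.degree_eq_weight_one]
  exact hQ (mem_support_iff.1 hs)

end Laplacian

section PhaseLaplacian

variable {σ R K : Type*} [Fintype σ] [CommRing R] [Field K]

/-- `e^(-Q) Δ(e^Q) = ΔQ + ∑ (∂ᵢQ)²`, the action of the Laplacian on the generalized plane wave
`e^Q` in terms of its phase `Q`. -/
noncomputable def phaseLaplacian (Q : MvPolynomial σ R) : MvPolynomial σ R :=
  laplacian σ R Q + ∑ i, pderiv i Q ^ 2

theorem phaseLaplacian_sub_sub_mem_pow_idealOfVars {n : ℕ} (Q : MvPolynomial σ R)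
    {S : MvPolynomial σ R} (hS : S.IsHomogeneous (n + 1)) :
    phaseLaplacian (Q - S) - (phaseLaplacian Q - laplacian σ R S) ∈ idealOfVars σ R ^ n := by
  have hdiff : phaseLaplacian (Q - S) - (phaseLaplacian Q - laplacian σ R S) =
      ∑ i, (pderiv i S - 2 * pderiv i Q) * pderiv i S := by
    have hsq (i : σ) : (pderiv i S - 2 * pderiv i Q) * pderiv i S =
        pderiv i (Q - S) ^ 2 - pderiv i Q ^ 2 := by
      rw [map_sub]
      ring
    simp only [phaseLaplacian, hsq, Finset.sum_sub_distrib, map_sub (laplacian σ R)]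
    ring
  rw [hdiff]
  exact Ideal.sum_mem _ fun i _ ↦ Ideal.mul_mem_left _ _ <|
    mem_pow_idealOfVars_of_isHomogeneous hS.pderiv

theorem exists_phaseLaplacian_add_mem_pow_idealOfVars [Nonempty σ] [CharZero K]
    (G : MvPolynomial σ K) (a : K) (b : σ → K) (n : ℕ) :
    ∃ Q : MvPolynomial σ K, Q.totalDegree ≤ n + 1 ∧ eval (fun _ ↦ 0) Q = a ∧
      (∀ i, eval (fun _ ↦ 0) (pderiv i Q) = b i) ∧
      phaseLaplacian Q + G ∈ idealOfVars σ K ^ n := by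
  classical
  induction n with
  | zero =>
    refine ⟨C a + ∑ i, C (b i) * X i, ?_, by simp, fun i ↦ by simp [pderiv_X, Pi.single_apply],
      by simp⟩
    refine (totalDegree_add _ _).trans (max_le (by simp) (totalDegree_finsetSum_le fun i _ ↦ ?_))
    exact (totalDegree_mul _ _).trans (by simp)
  | succ n ih =>
    obtain ⟨Q, hdeg, heval, hgrad, hQ⟩ := ih
    obtain ⟨S, hS, hΔS⟩ := exists_isHomogeneous_laplacian_eq
      (homogeneousComponent_isHomogeneous n (phaseLaplacian Q + G))
    have heval_zero {m : ℕ} {T : MvPolynomial σ K} (hT : T.IsHomogeneous (m + 1)) :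
        eval (fun _ ↦ 0) T = 0 :=
      eval_zero_of_mem_idealOfVars <|
        Ideal.pow_le_self m.succ_ne_zero (mem_pow_idealOfVars_of_isHomogeneous hT)
    refine ⟨Q - S, ?_, ?_, fun i ↦ ?_, ?_⟩
    · exact (totalDegree_sub _ _).trans (max_le (by lia) hS.totalDegree_le)
    · rw [map_sub, heval, heval_zero hS, sub_zero]
    · rw [map_sub, map_sub, hgrad, heval_zero hS.pderiv, sub_zero]
    · convert Ideal.add_mem _ (phaseLaplacian_sub_sub_mem_pow_idealOfVars Q hS)
        (sub_homogeneousComponent_mem_pow_idealOfVars hQ) using 1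
      rw [hΔS]
      ring

end PhaseLaplacian

section Recentering

theorem totalDegree_bind₁_le {σ τ R : Type*} [CommSemiring R] {u : σ → MvPolynomial τ R}
    (hu : ∀ i, (u i).totalDegree ≤ 1) (Q : MvPolynomial σ R) :
    (bind₁ u Q).totalDegree ≤ Q.totalDegree := by
  conv_lhs => rw [Q.as_sum, map_sum]
  refine totalDegree_finsetSum_le fun s hs ↦ le_trans ?_ (le_totalDegree hs)
  rw [bind₁_monomial]
  calc (C (coeff s Q) * ∏ i ∈ s.support, u i ^ s i).totalDegree
      ≤ ∑ i ∈ s.support, (u i ^ s i).totalDegree := by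
        refine (totalDegree_mul _ _).trans ?_
        simpa using totalDegree_finsetProd _ _
    _ ≤ ∑ i ∈ s.support, s i := Finset.sum_le_sum fun i _ ↦
        (totalDegree_pow _ _).trans (mul_le_of_le_one_right' (hu i))

variable {σ R : Type*} [CommRing R]

/-- The substitution `Q ↦ Q(X - c)`, which moves the origin to `c`. -/
noncomputable def recenter (c : σ → R) : MvPolynomial σ R →ₐ[R] MvPolynomial σ R :=
  bind₁ fun i ↦ X i - C (c i)

theorem totalDegree_recenter_le (c : σ → R) (Q : MvPolynomial σ R) :
    (recenter c Q).totalDegree ≤ Q.totalDegree :=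
  totalDegree_bind₁_le
    (fun i ↦ (totalDegree_sub_C_le _ _).trans (isHomogeneous_X R i).totalDegree_le) Q

theorem eval_recenter (c x : σ → R) (Q : MvPolynomial σ R) :
    eval x (recenter c Q) = eval (fun i ↦ x i - c i) Q := by
  have hcomp : (eval x).comp (recenter c : MvPolynomial σ R →+* MvPolynomial σ R) =
      eval fun i ↦ x i - c i := ringHom_ext (by simp [recenter]) (by simp [recenter])
  exact DFunLike.congr_fun hcomp Q

theorem pderiv_recenter (c : σ → R) (i : σ) (Q : MvPolynomial σ R) :
    pderiv i (recenter c Q) = recenter c (pderiv i Q) := by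
  induction Q using MvPolynomial.induction_on with
  | C a => simp [recenter]
  | add P Q hP hQ => simp [hP, hQ]
  | mul_X P j hP =>
    have hX : pderiv i (recenter c (X j)) = recenter c (pderiv i (X j)) := by
      obtain rfl | hij := eq_or_ne j i
      · simp [recenter]
      · simp [recenter, pderiv_X_of_ne hij]
    simp only [map_mul, pderiv_mul, map_add, hP, hX]

end Recentering

section NontriviallyNormedField

variable {𝕜 E F : Type*} [NontriviallyNormedField 𝕜] [NormedAddCommGroup E] [NormedSpace 𝕜 E]
  [NormedAddCommGroup F] [NormedSpace 𝕜 F] {f : E → F} {x : E}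

theorem iteratedFDeriv_add_two_apply (f : E → F) (x : E) {n : ℕ} (v : Fin (n + 2) → E) :
    iteratedFDeriv 𝕜 (n + 2) f x v =
      fderiv 𝕜 (fderiv 𝕜 (iteratedFDeriv 𝕜 n f)) x (v 0) (v 1) (Fin.tail (Fin.tail v)) := by
  have hcurry := LinearIsometryEquiv.comp_fderiv (𝕜 := 𝕜) (E := E →L[𝕜] E [×n]→L[𝕜] F)
    (F := E [×(n + 1)]→L[𝕜] F) (x := x) (f := fderiv 𝕜 (iteratedFDeriv 𝕜 n f))
    (continuousMultilinearCurryLeftEquiv 𝕜 (fun _ : Fin (n + 1) ↦ E) F).symm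
  rw [iteratedFDeriv_succ_apply_left, iteratedFDeriv_succ_eq_comp_left]
  exact DFunLike.congr_fun (DFunLike.congr_fun hcurry (v 0)) (Fin.tail v)

theorem iteratedFDeriv_succ_congr_tail {n : ℕ} (hf : ContDiffAt 𝕜 (n + 1 : ℕ) f x)
    {v w : Fin (n + 1) → E} (hhead : v 0 = w 0)
    (htail : ∀ y, ContDiffAt 𝕜 n f y →
      iteratedFDeriv 𝕜 n f y (Fin.tail v) = iteratedFDeriv 𝕜 n f y (Fin.tail w)) :
    iteratedFDeriv 𝕜 (n + 1) f x v = iteratedFDeriv 𝕜 (n + 1) f x w := by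
  have hdiff : DifferentiableAt 𝕜 (iteratedFDeriv 𝕜 n f) x :=
    (hf.iteratedFDeriv_right (m := 1) (by norm_cast; lia)).differentiableAt (by simp)
  rw [hdiff.iteratedFDeriv_succ_apply_left', hdiff.iteratedFDeriv_succ_apply_left', hhead]
  have hnear : ∀ᶠ y in nhds x, ContDiffAt 𝕜 n f y :=
    (hf.of_le (by norm_cast; lia)).eventually (by simp)
  have heq : (fun y ↦ iteratedFDeriv 𝕜 n f y (Fin.tail v)) =ᶠ[nhds x]
      fun y ↦ iteratedFDeriv 𝕜 n f y (Fin.tail w) := hnear.mono htail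
  rw [heq.fderiv_eq]

variable (𝕜) in
/-- The Taylor polynomial of order `n` of `f` at `x`, as a finite formal multilinear series. -/
noncomputable def taylorSeries (n : ℕ) (f : E → F) (x : E) :
    FormalMultilinearSeries 𝕜 E F := fun k ↦
  if k ≤ n then (k.factorial : 𝕜)⁻¹ • iteratedFDeriv 𝕜 k f x else 0

theorem hasFiniteFPowerSeriesOnBall_taylorSeries (n : ℕ) (f : E → F) (x : E) :
    HasFiniteFPowerSeriesOnBall (fun y ↦ (taylorSeries 𝕜 n f x).partialSum (n + 1) (y - x))
      (taylorSeries 𝕜 n f x) x (n + 1) ⊤ :=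
  .mk' (fun _ hk ↦ if_neg (by lia)) (by simp) fun y _ ↦ by
    simp [FormalMultilinearSeries.partialSum]

end NontriviallyNormedField

section RCLike

variable {𝕜 E F : Type*} [RCLike 𝕜] [NormedAddCommGroup E] [NormedSpace 𝕜 E]
  [NormedAddCommGroup F] [NormedSpace 𝕜 F] {f : E → F} {x : E}

theorem iteratedFDeriv_comp_swap_zero_one {n : ℕ} (hf : ContDiffAt 𝕜 (n + 2 : ℕ) f x)
    (v : Fin (n + 2) → E) :
    iteratedFDeriv 𝕜 (n + 2) f x (v ∘ Equiv.swap 0 1) = iteratedFDeriv 𝕜 (n + 2) f x v := by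
  have hsymm : IsSymmSndFDerivAt 𝕜 (iteratedFDeriv 𝕜 n f) x :=
    (hf.iteratedFDeriv_right (m := 2) (by norm_cast; lia)).isSymmSndFDerivAt (by simp)
  have htail : Fin.tail (Fin.tail (v ∘ Equiv.swap 0 1)) = Fin.tail (Fin.tail v) := by
    ext j
    simp [Fin.tail, Equiv.swap_apply_of_ne_of_ne, Fin.ext_iff]
  simp [iteratedFDeriv_add_two_apply, htail, hsymm.eq (v 0) (v 1)]

-- `ContDiffAt.iteratedFDeriv_comp_perm` assumes analyticity; over `ℝ` or `ℂ`, `C^n` is enough.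
theorem iteratedFDeriv_comp_perm {n : ℕ} (hf : ContDiffAt 𝕜 n f x) (σ : Equiv.Perm (Fin n))
    (v : Fin n → E) : iteratedFDeriv 𝕜 n f x (v ∘ σ) = iteratedFDeriv 𝕜 n f x v := by
  induction n generalizing x with
  | zero => rw [Subsingleton.elim (v ∘ σ) v]
  | succ n ih =>
    have hσ : σ ∈ Submonoid.closure (Set.range fun i : Fin n ↦ Equiv.swap i.castSucc i.succ) :=
      Equiv.Perm.mclosure_swap_castSucc_succ n ▸ Submonoid.mem_top σ
    induction hσ using Submonoid.closure_induction generalizing v with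
    | one => rfl
    | mul σ τ _ _ hσ hτ => rw [Equiv.Perm.coe_mul, ← Function.comp_assoc, hτ, hσ]
    | mem _ hswap =>
      obtain ⟨i, rfl⟩ := hswap
      obtain _ | n := n
      · exact i.elim0
      cases i using Fin.cases with
      | zero => exact iteratedFDeriv_comp_swap_zero_one hf v
      | succ j =>
        refine iteratedFDeriv_succ_congr_tail hf ?_ fun y hy ↦ ?_
        · simp [Equiv.swap_apply_of_ne_of_ne, Fin.ext_iff]
        · have htail : Fin.tail (v ∘ Equiv.swap j.succ.castSucc j.succ.succ) =
              Fin.tail v ∘ Equiv.swap j.castSucc j.succ := by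
            ext l
            simp only [Fin.tail, Function.comp_apply, (Fin.succ_injective _).map_swap,
              Fin.succ_castSucc]
          exact htail ▸ ih hy (Equiv.swap j.castSucc j.succ) (Fin.tail v)

theorem iteratedFDeriv_partialSum_taylorSeries {m n : ℕ} (hf : ContDiffAt 𝕜 n f x) (hmn : m ≤ n) :
    iteratedFDeriv 𝕜 m (fun y ↦ (taylorSeries 𝕜 n f x).partialSum (n + 1) (y - x)) x =
      iteratedFDeriv 𝕜 m f x := by
  have hseries := hasFiniteFPowerSeriesOnBall_taylorSeries (𝕜 := 𝕜) n f x
  have hcoeff (v : Fin m → E) (σ : Equiv.Perm (Fin m)) :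
      taylorSeries 𝕜 n f x m (fun i ↦ v (σ i)) =
        (m.factorial : 𝕜)⁻¹ • iteratedFDeriv 𝕜 m f x v := by
    rw [taylorSeries, if_pos hmn, smul_apply]
    congr 1
    exact iteratedFDeriv_comp_perm (hf.of_le (by exact_mod_cast hmn)) σ v
  ext v
  rw [hseries.toHasFPowerSeriesOnBall.iteratedFDeriv_eq_sum
    (by simpa using hseries.cpolynomialOn.analyticOn)]
  simp_rw [hcoeff]
  rw [Finset.sum_const, Finset.card_univ, Fintype.card_perm, Fintype.card_fin,
    ← Nat.cast_smul_eq_nsmul 𝕜, smul_inv_smul₀ (by exact_mod_cast m.factorial_ne_zero)]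

end RCLike

section Vanishing

variable {𝕜 E A : Type*} [NontriviallyNormedField 𝕜] [NormedAddCommGroup E] [NormedSpace 𝕜 E]

theorem iteratedFDeriv_mul_eq_zero [NormedRing A] [NormedAlgebra 𝕜 A] {f g : E → A} {x : E}
    {k l m : ℕ} (hf : ContDiff 𝕜 m f) (hg : ContDiff 𝕜 m g)
    (hf0 : ∀ i < k, iteratedFDeriv 𝕜 i f x = 0) (hg0 : ∀ j < l, iteratedFDeriv 𝕜 j g x = 0)
    (hm : m < k + l) : iteratedFDeriv 𝕜 m (fun y ↦ f y * g y) x = 0 := by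
  rw [← norm_le_zero_iff]
  refine (norm_iteratedFDeriv_mul_le hf hg x le_rfl).trans_eq (Finset.sum_eq_zero fun i hi ↦ ?_)
  have him : i < m + 1 := Finset.mem_range.1 hi
  rcases lt_or_ge i k with hik | hki
  · simp [hf0 i hik]
  · simp [hg0 (m - i) (by lia)]

variable [NormedCommRing A] [NormedAlgebra 𝕜 A] {σ : Type*} {u : σ → E → A}

theorem contDiff_eval {n : WithTop ℕ∞} (hu : ∀ i, ContDiff 𝕜 n (u i)) (Q : MvPolynomial σ A) :
    ContDiff 𝕜 n fun x ↦ eval (fun i ↦ u i x) Q := by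
  induction Q using MvPolynomial.induction_on with
  | C a => simpa using contDiff_const
  | add P Q hP hQ => simpa using hP.add hQ
  | mul_X P i hP => simpa using hP.mul (hu i)

theorem iteratedFDeriv_eval_eq_zero {n m : ℕ} (hu : ∀ i, ContDiff 𝕜 n (u i)) {x : E}
    (hux : ∀ i, u i x = 0) {Q : MvPolynomial σ A} (hQ : Q ∈ idealOfVars σ A ^ n) (hmn : m < n) :
    iteratedFDeriv 𝕜 m (fun y ↦ eval (fun i ↦ u i y) Q) x = 0 := by
  induction hQ using Submodule.pow_induction_on_left' generalizing m with
  | algebraMap => exact absurd hmn m.not_lt_zero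
  | add P Q n _ _ hP hQ =>
    have hsmooth (R : MvPolynomial σ A) : ContDiff 𝕜 m fun y ↦ eval (fun i ↦ u i y) R :=
      (contDiff_eval hu R).of_le (by exact_mod_cast hmn.le)
    simp only [map_add]
    rw [fun_iteratedFDeriv_add_apply (hsmooth P).contDiffAt (hsmooth Q).contDiffAt,
      hP hu hmn, hQ hu hmn, add_zero]
  | mem_mul L hL n Q _ hQ =>
    have hsmooth (R : MvPolynomial σ A) : ContDiff 𝕜 m fun y ↦ eval (fun i ↦ u i y) R :=
      (contDiff_eval hu R).of_le (by exact_mod_cast hmn.le)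
    have hL0 : ∀ i < 1, iteratedFDeriv 𝕜 i (fun y ↦ eval (fun i ↦ u i y) L) x = 0 := fun i hi ↦ by
      obtain rfl := Nat.lt_one_iff.1 hi
      ext
      simpa [hux] using eval_zero_of_mem_idealOfVars hL
    have hu' (i) : ContDiff 𝕜 n (u i) := (hu i).of_le (by exact_mod_cast n.le_succ)
    simp only [map_mul]
    exact iteratedFDeriv_mul_eq_zero (hsmooth L) (hsmooth Q) hL0 (fun j hj ↦ hQ hu' hj) (by lia)

end Vanishing

section TaylorPolynomial

theorem exists_eval_repr_eq_multilinearMap_diagonal {σ R M A : Type*} [Finite σ] [CommSemiring R]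
    [AddCommMonoid M] [Module R M] [CommSemiring A] [Algebra R A] (b : Module.Basis σ R M) {n : ℕ}
    (L : MultilinearMap R (fun _ : Fin n ↦ M) A) :
    ∃ H : MvPolynomial σ A, ∀ x, eval (fun i ↦ algebraMap R A (b.repr x i)) H = L fun _ ↦ x := by
  classical
  cases nonempty_fintype σ
  refine ⟨∑ r : Fin n → σ, C (L fun j ↦ b (r j)) * ∏ j, X (r j), fun x ↦ ?_⟩
  conv_rhs => rw [← b.sum_repr x, L.map_sum]
  simp only [L.map_smul_univ, map_sum, map_mul, map_prod, eval_C, eval_X, Algebra.smul_def,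
    mul_comm]

variable {𝕜 E σ A : Type*} [RCLike 𝕜] [NormedAddCommGroup E] [NormedSpace 𝕜 E]
  [NormedCommRing A] [NormedAlgebra 𝕜 A]

/-- The `i`-th coordinate function of the basis `b`, with origin at `x` and values in the
`𝕜`-algebra `A`, in which the variables of polynomials over `A` are evaluated. -/
noncomputable def centeredCoord (A : Type*) [NormedCommRing A] [NormedAlgebra 𝕜 A]
    (b : Module.Basis σ 𝕜 E) (x : E) (i : σ) (y : E) : A :=
  algebraMap 𝕜 A (b.repr (y - x) i)

theorem centeredCoord_self (b : Module.Basis σ 𝕜 E) (x : E) (i : σ) :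
    centeredCoord A b x i x = 0 := by
  simp [centeredCoord]

theorem contDiff_centeredCoord [Finite σ] {n : WithTop ℕ∞} (b : Module.Basis σ 𝕜 E) (x : E)
    (i : σ) : ContDiff 𝕜 n (centeredCoord A b x i) :=
  have : FiniteDimensional 𝕜 E := .of_basis b
  (Algebra.linearMap 𝕜 A ∘ₗ b.coord i).toContinuousLinearMap.contDiff.comp
    (contDiff_id.sub contDiff_const)

theorem exists_iteratedFDeriv_sub_eval_centeredCoord_eq_zero [Finite σ] (b : Module.Basis σ 𝕜 E)
    {n : ℕ} {g : E → A} {x : E} (hg : ContDiffAt 𝕜 n g x) :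
    ∃ G : MvPolynomial σ A, ∀ m ≤ n,
      iteratedFDeriv 𝕜 m (fun y ↦ g y - eval (fun i ↦ centeredCoord A b x i y) G) x = 0 := by
  choose H hH using fun k ↦
    exists_eval_repr_eq_multilinearMap_diagonal b (taylorSeries 𝕜 n g x k).toMultilinearMap
  refine ⟨∑ k ∈ Finset.range (n + 1), H k, fun m hm ↦ ?_⟩
  rw [fun_iteratedFDeriv_sub_apply (hg.of_le (Nat.cast_le.2 hm))
    (contDiff_eval (contDiff_centeredCoord b x) _).contDiffAt, sub_eq_zero]
  simp only [centeredCoord, map_sum, hH]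
  exact (iteratedFDeriv_partialSum_taylorSeries hg hm).symm

end TaylorPolynomial

end QuasiTrefftz

open QuasiTrefftz

/-- Existence of phase polynomials for GPWs for the operator `Δ + g`:
given `g` of class `C^{p−2}` near `x0`, for every prescribed value `a` and gradient `b`
at `x0` there is a polynomial `P` of total degree `≤ p` with `P(x0) = a`,
`∂ᵢP(x0) = bᵢ`, such that all derivatives of order `≤ p − 2` of
`x ↦ ΔP(x) + ∑ᵢ (∂ᵢP(x))² + g(x)` vanish at `x0` (quasi-Trefftz property). -/
theorem stmt_12 (d p : ℕ) (hd : 1 ≤ d) (hp : 2 ≤ p)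
    (x0 : EuclideanSpace ℝ (Fin d)) (g : EuclideanSpace ℝ (Fin d) → ℂ)
    (hg : ∃ V : Set (EuclideanSpace ℝ (Fin d)), IsOpen V ∧ x0 ∈ V ∧
      ContDiffOn ℝ (↑(p - 2) : ℕ∞) g V) :
    ∀ (a : ℂ) (b : Fin d → ℂ),
      ∃ P : MvPolynomial (Fin d) ℂ,
        P.totalDegree ≤ p ∧
        MvPolynomial.eval (fun i => (x0 i : ℂ)) P = a ∧
        (∀ i : Fin d,
          MvPolynomial.eval (fun i' => (x0 i' : ℂ)) (MvPolynomial.pderiv i P) = b i) ∧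
        ∀ m : ℕ, m ≤ p - 2 →
          iteratedFDeriv ℝ m (fun x : EuclideanSpace ℝ (Fin d) =>
            (∑ i : Fin d, MvPolynomial.eval (fun i' => (x i' : ℂ))
                (MvPolynomial.pderiv i (MvPolynomial.pderiv i P))) +
              (∑ i : Fin d,
                (MvPolynomial.eval (fun i' => (x i' : ℂ)) (MvPolynomial.pderiv i P)) ^ 2) +
              g x) x0 = 0 := by
  intro a b
  obtain ⟨V, hV, hxV, hgV⟩ := hg
  have hgx : ContDiffAt ℝ (p - 2 : ℕ) g x0 := hgV.contDiffAt (hV.mem_nhds hxV)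
  have : Nonempty (Fin d) := ⟨⟨0, hd⟩⟩
  let basis := PiLp.basisFun 2 ℝ (Fin d)
  let u := centeredCoord ℂ basis x0
  have hu (n : ℕ) (i : Fin d) : ContDiff ℝ n (u i) := contDiff_centeredCoord basis x0 i
  obtain ⟨G, hG⟩ := exists_iteratedFDeriv_sub_eval_centeredCoord_eq_zero basis hgx
  obtain ⟨Q, hdeg, heval, hgrad, hQ⟩ :=
    exists_phaseLaplacian_add_mem_pow_idealOfVars G a b (p - 1)
  refine ⟨recenter (fun i ↦ (x0 i : ℂ)) Q, (totalDegree_recenter_le _ Q).trans (by lia),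
    by simpa [eval_recenter] using heval,
    fun i ↦ by simpa [pderiv_recenter, eval_recenter] using hgrad i, fun m hm ↦ ?_⟩
  have hR := iteratedFDeriv_eval_eq_zero (hu _) (centeredCoord_self basis x0) hQ
    (show m < p - 1 by lia)
  convert_to iteratedFDeriv ℝ m (fun x ↦ MvPolynomial.eval (fun i ↦ u i x) (phaseLaplacian Q + G) +
    (g x - MvPolynomial.eval (fun i ↦ u i x) G)) x0 = 0 using 2
  · ext x
    simp [pderiv_recenter, eval_recenter, phaseLaplacian, laplacian_apply, u, basis, centeredCoord]
  rw [fun_iteratedFDeriv_add_apply (contDiff_eval (hu m) _).contDiffAt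
    ((hgx.of_le (Nat.cast_le.2 hm)).sub (contDiff_eval (hu m) G).contDiffAt), hR, hG m hm, add_zero]
end

section
/- Let d ≥ 1, p ≥ 2 be integers, x0 ∈ ℝ^d, and let g : ℝ^d → ℂ be of class C^{p−2} on an open neighborhood of x0. Then the set of polynomials P ∈ ℂ[X_1,...,X_d] of total degree at most p such that the function F(x) := ΔP(x) + Σ_{i=1}^d (∂_i P(x))^2 + g(x) has all its iterated derivatives of order at most p−2 vanish at x0 is infinite. -/
/-!
Translating `x0` to the origin, replace `g` by its Taylor polynomial `G` of order `p - 2`, which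
changes no derivative of `F` of order at most `p - 2`. It is then enough to solve
`ΔP + ∑ i, (∂ᵢP)² + G ≡ 0` modulo polynomials vanishing to order `p - 1` at the origin. Since `Δ`
maps homogeneous polynomials of degree `n + 2` onto those of degree `n`, this can be done one degree
at a time: adding to `P` a homogeneous `Q` of degree `n + 2` changes `ΔP` only in degree `n` and
changes `∑ i, (∂ᵢP)²` only in degrees at least `n + 1`. Adding a constant to a solution gives
another one.
-/

open Finset MvPolynomial

section IteratedDerivatives

variable {𝕜 E F : Type*} [RCLike 𝕜] [NormedAddCommGroup E] [NormedSpace 𝕜 E]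
  [NormedAddCommGroup F] [NormedSpace 𝕜 F] {f : E → F} {x : E} {n : ℕ}

lemma iteratedFDeriv_succ_apply_eq_fderiv_apply
    (hf : DifferentiableAt 𝕜 (iteratedFDeriv 𝕜 n f) x) (v : Fin (n + 1) → E) :
    iteratedFDeriv 𝕜 (n + 1) f x v =
      fderiv 𝕜 (fun y => iteratedFDeriv 𝕜 n f y (Fin.tail v)) x (v 0) := by
  rw [iteratedFDeriv_succ_apply_left, fderiv_continuousMultilinear_apply_const_apply hf]

lemma iteratedFDeriv_add_two_comp_swap_zero_one
    (hf : ContDiffAt 𝕜 (n + 2 : ℕ) f x) (v : Fin (n + 2) → E) :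
    iteratedFDeriv 𝕜 (n + 2) f x (v ∘ Equiv.swap 0 1) = iteratedFDeriv 𝕜 (n + 2) f x v := by
  have hD : ContDiffAt 𝕜 2 (iteratedFDeriv 𝕜 n f) x :=
    hf.iteratedFDeriv_right (by norm_cast; omega)
  have hDD : DifferentiableAt 𝕜 (fderiv 𝕜 (iteratedFDeriv 𝕜 n f)) x :=
    (hD.fderiv_right (m := 1) le_rfl).differentiableAt one_ne_zero
  have hsnd (w : Fin (n + 2) → E) : iteratedFDeriv 𝕜 (n + 2) f x w =
      fderiv 𝕜 (fderiv 𝕜 (iteratedFDeriv 𝕜 n f)) x (w 0) (w 1) (Fin.tail (Fin.tail w)) := by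
    rw [iteratedFDeriv_succ_apply_eq_fderiv_apply
      (hf.differentiableAt_iteratedFDeriv (by norm_cast; omega))]
    change fderiv 𝕜 (fun y =>
      fderiv 𝕜 (iteratedFDeriv 𝕜 n f) y (w 1) (Fin.tail (Fin.tail w))) x (w 0) = _
    rw [fderiv_continuousMultilinear_apply_const_apply
        (hDD.clm_apply (differentiableAt_const (w 1))),
      fderiv_clm_apply hDD (differentiableAt_const (w 1))]
    simp
  have htail : Fin.tail (Fin.tail (v ∘ Equiv.swap 0 1)) = Fin.tail (Fin.tail v) := by
    funext k
    simp only [Fin.tail, Function.comp_apply]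
    rw [Equiv.swap_apply_of_ne_of_ne (Fin.succ_ne_zero _) (by simp [Fin.ext_iff])]
  have hsymm : IsSymmSndFDerivAt 𝕜 (iteratedFDeriv 𝕜 n f) x := hD.isSymmSndFDerivAt (by simp)
  rw [hsnd, hsnd, htail, hsymm.eq]
  simp

lemma iteratedFDeriv_succ_comp_swap_castSucc_succ (hf : ContDiffAt 𝕜 (n + 1 : ℕ) f x)
    (i : Fin n) (v : Fin (n + 1) → E) :
    iteratedFDeriv 𝕜 (n + 1) f x (v ∘ Equiv.swap i.castSucc i.succ) =
      iteratedFDeriv 𝕜 (n + 1) f x v := by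
  induction n generalizing x with
  | zero => exact i.elim0
  | succ n ih =>
    cases i using Fin.cases with
    | zero => exact iteratedFDeriv_add_two_comp_swap_zero_one hf v
    | succ j =>
      have hD : DifferentiableAt 𝕜 (iteratedFDeriv 𝕜 (n + 1) f) x :=
        hf.differentiableAt_iteratedFDeriv (by norm_cast; omega)
      have hhead : (v ∘ Equiv.swap j.succ.castSucc j.succ.succ) 0 = v 0 := by
        rw [Function.comp_apply, Equiv.swap_apply_of_ne_of_ne] <;> simp [Fin.ext_iff]
      have htail : Fin.tail (v ∘ Equiv.swap j.succ.castSucc j.succ.succ) =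
          Fin.tail v ∘ Equiv.swap j.castSucc j.succ := by
        funext k
        exact congrArg v ((Fin.succ_injective (n + 1)).swap_apply j.castSucc j.succ k)
      rw [iteratedFDeriv_succ_apply_eq_fderiv_apply hD,
        iteratedFDeriv_succ_apply_eq_fderiv_apply hD, hhead, htail]
      congr 1
      apply Filter.EventuallyEq.fderiv_eq
      filter_upwards [hf.eventually (by simp)] with y hy
      exact ih (hy.of_le (by norm_cast; omega)) j (Fin.tail v)

lemma iteratedFDeriv_comp_perm_of_contDiffAt (hf : ContDiffAt 𝕜 n f x)
    (τ : Equiv.Perm (Fin n)) (v : Fin n → E) :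
    iteratedFDeriv 𝕜 n f x (v ∘ τ) = iteratedFDeriv 𝕜 n f x v := by
  cases n with
  | zero => rw [Subsingleton.elim (v ∘ τ) v]
  | succ n =>
    have hτ : τ ∈ Submonoid.closure (Set.range fun i : Fin n ↦ Equiv.swap i.castSucc i.succ) := by
      rw [Equiv.Perm.mclosure_swap_castSucc_succ]
      trivial
    induction hτ using Submonoid.closure_induction generalizing v with
    | mem _ hs =>
      obtain ⟨i, rfl⟩ := hs
      exact iteratedFDeriv_succ_comp_swap_castSucc_succ hf i v
    | one => rfl
    | mul τ₁ τ₂ _ _ h₁ h₂ => rw [Equiv.Perm.coe_mul, ← Function.comp_assoc, h₂, h₁]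

variable (𝕜) in
/-- The Taylor polynomial of order `N` of `f` at `x₀`, as a function of the displacement from
`x₀`. -/
noncomputable def taylorPolynomial (f : E → F) (N : ℕ) (x₀ y : E) : F :=
  ∑ k ∈ range (N + 1), (k.factorial : 𝕜)⁻¹ • iteratedFDeriv 𝕜 k f x₀ fun _ => y

lemma iteratedFDeriv_taylorPolynomial_zero [CompleteSpace F] {N m : ℕ} {x₀ : E}
    (hf : ContDiffAt 𝕜 N f x₀) (hm : m ≤ N) :
    iteratedFDeriv 𝕜 m (taylorPolynomial 𝕜 f N x₀) 0 = iteratedFDeriv 𝕜 m f x₀ := by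
  let p : FormalMultilinearSeries 𝕜 E F := fun k =>
    if k ≤ N then (k.factorial : 𝕜)⁻¹ • iteratedFDeriv 𝕜 k f x₀ else 0
  have hp : HasFPowerSeriesOnBall (taylorPolynomial 𝕜 f N x₀) p 0 ⊤ := by
    refine (HasFiniteFPowerSeriesOnBall.mk' (n := N + 1)
      (fun k hk => if_neg (by omega)) ENNReal.zero_lt_top
      fun y _ => ?_).toHasFPowerSeriesOnBall
    rw [zero_add]
    refine sum_congr rfl fun k hk => ?_
    simp only [if_pos (Nat.lt_succ_iff.mp (mem_range.mp hk))]
    rfl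
  have hsymm (τ : Equiv.Perm (Fin m)) (v : Fin m → E) :
      iteratedFDeriv 𝕜 m f x₀ (fun i => v (τ i)) = iteratedFDeriv 𝕜 m f x₀ v :=
    iteratedFDeriv_comp_perm_of_contDiffAt (hf.of_le (by exact_mod_cast hm)) τ v
  have hfact : (m.factorial : 𝕜) ≠ 0 := by exact_mod_cast m.factorial_ne_zero
  ext v
  rw [hp.iteratedFDeriv_eq_sum_of_completeSpace]
  simp only [p, if_pos hm, smul_apply, hsymm, sum_const, card_univ,
    Fintype.card_perm, Fintype.card_fin]
  rw [← Nat.cast_smul_eq_nsmul 𝕜, smul_inv_smul₀ hfact]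

lemma contDiff_taylorPolynomial (f : E → F) (N : ℕ) (x₀ : E) {r : WithTop ℕ∞} :
    ContDiff 𝕜 r (taylorPolynomial 𝕜 f N x₀) :=
  ContDiff.sum fun k _ => contDiff_const.smul <|
    (iteratedFDeriv 𝕜 k f x₀).contDiff.comp <| contDiff_pi' fun _ => contDiff_id

lemma iteratedFDeriv_sub_taylorPolynomial_eq_zero [CompleteSpace F] {N m : ℕ} {x₀ : E}
    (hf : ContDiffAt 𝕜 N f x₀) (hm : m ≤ N) :
    iteratedFDeriv 𝕜 m (fun x => f x - taylorPolynomial 𝕜 f N x₀ (x - x₀)) x₀ = 0 := by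
  have htaylor : ContDiff 𝕜 m fun x => taylorPolynomial 𝕜 f N x₀ (x - x₀) :=
    (contDiff_taylorPolynomial f N x₀).comp (contDiff_id.sub contDiff_const)
  rw [fun_iteratedFDeriv_sub_apply (hf.of_le (by exact_mod_cast hm)) htaylor.contDiffAt,
    iteratedFDeriv_comp_sub, sub_self, iteratedFDeriv_taylorPolynomial_zero hf hm, sub_self]

end IteratedDerivatives

section MvPolynomialEvaluation

variable {R A M ι : Type*} [CommRing R] [CommRing A] [Algebra R A] [AddCommGroup M] [Module R M]

lemma exists_mvPolynomial_eval_repr_eq_diagonal [Finite ι] (b : Module.Basis ι R M) {n : ℕ}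
    (S : MultilinearMap R (fun _ : Fin n => M) A) :
    ∃ H : MvPolynomial ι A, ∀ y, eval (fun i => algebraMap R A (b.repr y i)) H = S fun _ => y := by
  classical
  have := Fintype.ofFinite ι
  refine ⟨∑ r : Fin n → ι, C (S fun j => b (r j)) * ∏ j, X (r j), fun y => ?_⟩
  have hS : (S fun _ => y) = S fun _ => ∑ i, b.repr y i • b i := by rw [b.sum_repr]
  rw [hS, S.map_sum]
  simp only [S.map_smul_univ, map_sum, map_mul, map_prod, eval_C, eval_X, Algebra.smul_def]
  exact sum_congr rfl fun r _ => mul_comm _ _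

lemma exists_mvPolynomial_eval_eq_taylorPolynomial [Fintype ι] (f : EuclideanSpace ℝ ι → ℂ)
    (N : ℕ) (x₀ : EuclideanSpace ℝ ι) :
    ∃ G : MvPolynomial ι ℂ, ∀ y, eval (fun i => (y i : ℂ)) G = taylorPolynomial ℝ f N x₀ y := by
  choose H hH using fun k => exists_mvPolynomial_eval_repr_eq_diagonal
    (EuclideanSpace.basisFun ι ℝ).toBasis (iteratedFDeriv ℝ k f x₀).toMultilinearMap
  refine ⟨∑ k ∈ range (N + 1), C (k.factorial : ℂ)⁻¹ * H k, fun y => ?_⟩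
  rw [map_sum]
  refine sum_congr rfl fun k _ => ?_
  have hk : eval (fun i => (y i : ℂ)) (H k) = iteratedFDeriv ℝ k f x₀ fun _ => y := hH k y
  rw [map_mul, eval_C, hk, Complex.real_smul]
  simp

end MvPolynomialEvaluation

section Vanishing

variable {𝕜 E A σ : Type*} [NontriviallyNormedField 𝕜] [NormedAddCommGroup E] [NormedSpace 𝕜 E]

lemma iteratedFDeriv_mul_eq_zero_of_apply_eq_zero [NormedRing A] [NormedAlgebra 𝕜 A]
    {f g : E → A} {x : E} {m : ℕ}
    (hf : ContDiff 𝕜 m f) (hg : ContDiff 𝕜 m g) (hfx : f x = 0)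
    (hgx : ∀ k < m, iteratedFDeriv 𝕜 k g x = 0) :
    iteratedFDeriv 𝕜 m (fun y => f y * g y) x = 0 := by
  rw [← norm_le_zero_iff]
  refine (norm_iteratedFDeriv_mul_le hf hg x le_rfl).trans
    (sum_eq_zero fun i hi => ?_).le
  rcases Nat.eq_zero_or_pos i with rfl | hpos
  · simp [hfx]
  · rw [hgx (m - i) (by have := mem_range.mp hi; omega), norm_zero, mul_zero]

variable [NormedCommRing A] [NormedAlgebra 𝕜 A]

lemma contDiff_mvPolynomial_eval_clm (L : σ → E →L[𝕜] A) (p : MvPolynomial σ A) {n : WithTop ℕ∞} :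
    ContDiff 𝕜 n fun x => eval (L · x) p :=
  (AnalyticOnNhd.eval_continuousLinearMap' L p).contDiff

lemma iteratedFDeriv_mvPolynomial_eval_clm_zero (L : σ → E →L[𝕜] A) {p : MvPolynomial σ A}
    {n m : ℕ} (hp : p ∈ idealOfVars σ A ^ n) (hm : m < n) :
    iteratedFDeriv 𝕜 m (fun x => eval (L · x) p) 0 = 0 := by
  induction n generalizing p m with
  | zero => omega
  | succ n ih =>
    rw [pow_succ'] at hp
    induction hp using Submodule.mul_induction_on' with
    | mem_mul_mem a ha b hb =>
      simp only [map_mul]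
      have ha₀ : eval (L · 0) a = 0 := by
        have hle : idealOfVars σ A ≤ RingHom.ker (eval (L · 0)) := by
          rw [Ideal.span_le]
          rintro _ ⟨i, rfl⟩
          simp
        exact hle ha
      exact iteratedFDeriv_mul_eq_zero_of_apply_eq_zero (contDiff_mvPolynomial_eval_clm L a)
        (contDiff_mvPolynomial_eval_clm L b) ha₀ fun k hk => ih hb (by omega)
    | add a _ b _ ha hb =>
      simp only [map_add]
      rw [fun_iteratedFDeriv_add_apply (contDiff_mvPolynomial_eval_clm L a).contDiffAt
        (contDiff_mvPolynomial_eval_clm L b).contDiffAt, ha, hb, add_zero]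

end Vanishing

section Laplacian

variable {σ R K : Type*} [CommRing R] [Field K] [CharZero K]

lemma pderiv_pderiv_comm (i j : σ) (p : MvPolynomial σ R) :
    pderiv i (pderiv j p) = pderiv j (pderiv i p) := by
  classical
  have h : ⁅pderiv (R := R) i, pderiv (R := R) j⁆ = 0 := by
    ext k
    simp [Derivation.commutator_apply, pderiv_X, Pi.single_apply, apply_ite]
  rw [← sub_eq_zero, ← Derivation.commutator_apply, h, Derivation.zero_apply]

variable [Fintype σ]

/-- The formal Laplacian `∑ i, ∂ᵢ²`, as a linear map so that it passes through sums and scalars. -/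
noncomputable def polyLaplacian : MvPolynomial σ R →ₗ[R] MvPolynomial σ R :=
  ∑ i, (pderiv i).toLinearMap ∘ₗ (pderiv i).toLinearMap

lemma polyLaplacian_apply (p : MvPolynomial σ R) :
    polyLaplacian p = ∑ i, pderiv i (pderiv i p) := by
  simp [polyLaplacian]

lemma pderiv_polyLaplacian (i : σ) (p : MvPolynomial σ R) :
    pderiv i (polyLaplacian p) = polyLaplacian (pderiv i p) := by
  simp only [polyLaplacian_apply, map_sum, pderiv_pderiv_comm i]

lemma polyLaplacian_mul (p q : MvPolynomial σ R) :
    polyLaplacian (p * q) = polyLaplacian p * q + 2 * ∑ i, pderiv i p * pderiv i q +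
      p * polyLaplacian q := by
  simp only [polyLaplacian_apply, sum_mul, mul_sum, ← sum_add_distrib]
  refine sum_congr rfl fun i _ => ?_
  simp only [pderiv_mul, map_add]
  ring

lemma polyLaplacian_X_pow_add_two (i : σ) (a : ℕ) :
    polyLaplacian (X i ^ (a + 2) : MvPolynomial σ R) =
      C (((a + 2) * (a + 1) : ℕ) : R) * X i ^ a := by
  have hderiv (k : ℕ) : pderiv i (X i ^ (k + 1)) = C ((k + 1 : ℕ) : R) * X i ^ k := by simp
  rw [polyLaplacian_apply, sum_eq_single i]
  · rw [hderiv, pderiv_C_mul, hderiv, ← mul_assoc, ← C_mul, ← Nat.cast_mul]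
  · intro j _ hj
    simp [pderiv_X_of_ne hj.symm]
  · simp

lemma polyLaplacian_X_pow_add_two_mul {i : σ} {q : MvPolynomial σ R} (hq : pderiv i q = 0)
    (a : ℕ) :
    polyLaplacian (X i ^ (a + 2) * q) =
      C (((a + 2) * (a + 1) : ℕ) : R) * (X i ^ a * q) + X i ^ (a + 2) * polyLaplacian q := by
  have hcross : ∑ j, pderiv j (X i ^ (a + 2)) * pderiv j q = 0 := by
    refine sum_eq_zero fun j _ => ?_
    rcases eq_or_ne i j with rfl | hij
    · rw [hq, mul_zero]
    · rw [pderiv_pow, pderiv_X_of_ne hij, mul_zero, zero_mul]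
  rw [polyLaplacian_mul, polyLaplacian_X_pow_add_two, hcross]
  ring

lemma isHomogeneous_polyLaplacian {p : MvPolynomial σ R} {n : ℕ} (hp : p.IsHomogeneous n) :
    (polyLaplacian p).IsHomogeneous (n - 2) := by
  rw [polyLaplacian_apply]
  exact IsHomogeneous.sum _ _ _ fun i _ => hp.pderiv.pderiv

lemma polyLaplacian_eq_zero_of_isHomogeneous_of_le_one {p : MvPolynomial σ R} {n : ℕ}
    (hp : p.IsHomogeneous n) (hn : n ≤ 1) : polyLaplacian p = 0 := by
  rw [polyLaplacian_apply]
  refine sum_eq_zero fun i _ => ?_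
  have hconst : (pderiv i p).IsHomogeneous 0 := by simpa [Nat.sub_eq_zero_of_le hn] using hp.pderiv
  rw [← totalDegree_zero_iff_isHomogeneous, totalDegree_eq_zero_iff_eq_C] at hconst
  rw [hconst, pderiv_C]

-- The error term in `polyLaplacian_X_pow_add_two_mul` is again a power of `X i` times a polynomial
-- free of `X i`, whose degree has dropped by two.
lemma exists_polyLaplacian_eq_X_pow_mul (i : σ) {k : ℕ} {q : MvPolynomial σ K}
    (hq : q.IsHomogeneous k) (hqi : pderiv i q = 0) (a : ℕ) :
    ∃ Q : MvPolynomial σ K, Q.IsHomogeneous (a + k + 2) ∧ polyLaplacian Q = X i ^ a * q := by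
  induction k using Nat.strong_induction_on generalizing q a with
  | _ k ih =>
    obtain ⟨Q, hQ, hΔQ⟩ : ∃ Q : MvPolynomial σ K, Q.IsHomogeneous (a + k + 2) ∧
        polyLaplacian Q = X i ^ (a + 2) * polyLaplacian q := by
      rcases Nat.lt_or_ge 1 k with hk | hk
      · obtain ⟨Q, hQ, hΔQ⟩ := ih (k - 2) (by omega) (isHomogeneous_polyLaplacian hq)
          (by rw [pderiv_polyLaplacian, hqi, map_zero]) (a + 2)
        exact ⟨Q, by rwa [show a + 2 + (k - 2) + 2 = a + k + 2 by omega] at hQ, hΔQ⟩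
      · exact ⟨0, isHomogeneous_zero _ _ _, by
          rw [polyLaplacian_eq_zero_of_isHomogeneous_of_le_one hq hk, map_zero, mul_zero]⟩
    set c : K := (((a + 2) * (a + 1) : ℕ) : K) with hc
    have hc₀ : c ≠ 0 := by rw [hc, Nat.cast_ne_zero]; positivity
    refine ⟨c⁻¹ • (X i ^ (a + 2) * q - Q), ?_, ?_⟩
    · rw [smul_eq_C_mul]
      refine (IsHomogeneous.sub ?_ hQ).C_mul _
      rw [add_right_comm]
      exact (isHomogeneous_X_pow i (a + 2)).mul hq
    · rw [map_smul, map_sub, polyLaplacian_X_pow_add_two_mul hqi, hΔQ, add_sub_cancel_right,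
        ← hc, ← smul_eq_C_mul, inv_smul_smul₀ hc₀]

lemma exists_polyLaplacian_eq_monomial [Nonempty σ] (s : σ →₀ ℕ) (c : K) :
    ∃ Q : MvPolynomial σ K, Q.IsHomogeneous (s.degree + 2) ∧ polyLaplacian Q = monomial s c := by
  classical
  obtain ⟨i⟩ := ‹Nonempty σ›
  have hs : Finsupp.single i (s i) + s.erase i = s := Finsupp.single_add_erase i s
  have hdeg : s i + (s.erase i).degree = s.degree := by
    conv_rhs => rw [← hs, map_add, Finsupp.degree_single]
  obtain ⟨Q, hQ, hΔQ⟩ := exists_polyLaplacian_eq_X_pow_mul (K := K) i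
    (isHomogeneous_monomial c (d := s.erase i) rfl) (by simp [pderiv_monomial]) (s i)
  refine ⟨Q, hdeg ▸ hQ, ?_⟩
  rw [hΔQ, X_pow_eq_monomial, monomial_mul, hs, one_mul]

lemma exists_polyLaplacian_eq_of_isHomogeneous [Nonempty σ] {n : ℕ} {p : MvPolynomial σ K}
    (hp : p.IsHomogeneous n) :
    ∃ Q : MvPolynomial σ K, Q.IsHomogeneous (n + 2) ∧ polyLaplacian Q = p := by
  choose Q hQ hΔQ using fun s => exists_polyLaplacian_eq_monomial s (coeff s p)
  refine ⟨∑ s ∈ p.support, Q s, IsHomogeneous.sum _ _ _ fun s hs => ?_, ?_⟩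
  · have hdeg : s.degree = n := by
      by_contra hne
      exact mem_support_iff.mp hs (hp.coeff_eq_zero hne)
    exact hdeg ▸ hQ s
  · simp only [map_sum, hΔQ, support_sum_monomial_coeff]

end Laplacian

section OrderOfVanishing

variable {σ R : Type*} [CommRing R] {n : ℕ} {p : MvPolynomial σ R}

lemma mem_pow_idealOfVars_of_isHomogeneous (hp : p.IsHomogeneous n) : p ∈ idealOfVars σ R ^ n :=
  (mem_pow_idealOfVars_iff' n p).mpr fun _ hs => hp.coeff_eq_zero hs.ne

lemma sub_homogeneousComponent_mem_pow_succ_idealOfVars (hp : p ∈ idealOfVars σ R ^ n) :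
    p - homogeneousComponent n p ∈ idealOfVars σ R ^ (n + 1) := by
  rw [mem_pow_idealOfVars_iff'] at hp ⊢
  intro s hs
  rw [coeff_sub, coeff_homogeneousComponent]
  split_ifs with hsn
  · exact sub_self _
  · rw [hp s (by omega), sub_zero]

end OrderOfVanishing

section PhaseLaplacian

variable {σ R K : Type*} [Fintype σ] [CommRing R] [Field K] [CharZero K]

/-- The nonlinear operator `P ↦ e⁻ᴾ Δ eᴾ = ΔP + ∑ i, (∂ᵢP)²`, which `Δ` induces on the phase of a
generalized plane wave `e ^ P`. -/
noncomputable def phaseLaplacian (P : MvPolynomial σ R) : MvPolynomial σ R :=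
  polyLaplacian P + ∑ i, pderiv i P ^ 2

lemma phaseLaplacian_add (P Q : MvPolynomial σ R) :
    phaseLaplacian (P + Q) =
      phaseLaplacian P + polyLaplacian Q + ∑ i, (2 * pderiv i P + pderiv i Q) * pderiv i Q := by
  have hsq : ∑ i, (pderiv i P + pderiv i Q) ^ 2 =
      ∑ i, pderiv i P ^ 2 + ∑ i, (2 * pderiv i P + pderiv i Q) * pderiv i Q := by
    rw [← sum_add_distrib]
    exact sum_congr rfl fun i _ => by ring
  simp only [phaseLaplacian, map_add, hsq]
  ring

lemma exists_phaseLaplacian_add_mem_pow_idealOfVars [Nonempty σ] (G : MvPolynomial σ K) (n : ℕ) :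
    ∃ P : MvPolynomial σ K, P.totalDegree ≤ n + 1 ∧
      phaseLaplacian P + G ∈ idealOfVars σ K ^ n := by
  induction n with
  | zero => exact ⟨0, by simp, by simp⟩
  | succ n ih =>
    obtain ⟨P, hdeg, hP⟩ := ih
    obtain ⟨Q, hQ, hΔQ⟩ := exists_polyLaplacian_eq_of_isHomogeneous
      (homogeneousComponent_isHomogeneous n (phaseLaplacian P + G)).neg
    refine ⟨P + Q, (totalDegree_add P Q).trans (max_le (by omega) hQ.totalDegree_le), ?_⟩
    have hcross : ∑ i, (2 * pderiv i P + pderiv i Q) * pderiv i Q ∈ idealOfVars σ K ^ (n + 1) :=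
      Ideal.sum_mem _ fun i _ => Ideal.mul_mem_left _ _ <|
        mem_pow_idealOfVars_of_isHomogeneous hQ.pderiv
    convert Ideal.add_mem _ (sub_homogeneousComponent_mem_pow_succ_idealOfVars hP) hcross using 1
    rw [phaseLaplacian_add, hΔQ]
    ring

end PhaseLaplacian

section Translation

variable {σ R : Type*} [CommRing R]

/-- The substitution `P(X) ↦ P(X - c)`, which recentres a polynomial from the origin to `c`. -/
noncomputable def shiftVars (c : σ → R) : MvPolynomial σ R →ₐ[R] MvPolynomial σ R :=
  aeval fun i => X i - C (c i)

lemma eval_shiftVars (c x : σ → R) (P : MvPolynomial σ R) :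
    eval x (shiftVars c P) = eval (x - c) P := by
  induction P using MvPolynomial.induction_on <;> simp_all [shiftVars]

lemma pderiv_shiftVars (c : σ → R) (i : σ) (P : MvPolynomial σ R) :
    pderiv i (shiftVars c P) = shiftVars c (pderiv i P) := by
  induction P using MvPolynomial.induction_on with
  | C a => simp [shiftVars]
  | add P Q hP hQ => simp only [map_add, hP, hQ]
  | mul_X P j hP =>
    have hX : pderiv i (shiftVars c (X j)) = shiftVars c (pderiv i (X j)) := by
      rcases eq_or_ne j i with rfl | hji
      · simp [shiftVars]
      · simp [shiftVars, pderiv_X_of_ne hji]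
    simp only [map_mul, map_add, pderiv_mul, hP, hX]

lemma totalDegree_shiftVars_le (c : σ → R) (P : MvPolynomial σ R) :
    (shiftVars c P).totalDegree ≤ P.totalDegree := by
  rw [shiftVars, aeval_def, eval₂_eq]
  refine totalDegree_finsetSum_le fun s hs => (totalDegree_mul _ _).trans ?_
  have hlin (i : σ) : (X i - C (c i)).totalDegree ≤ 1 :=
    (totalDegree_sub_C_le _ _).trans (isHomogeneous_X R i).totalDegree_le
  rw [algebraMap_eq, totalDegree_C, zero_add]
  calc (∏ i ∈ s.support, (X i - C (c i)) ^ s i).totalDegree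
      ≤ ∑ i ∈ s.support, s i * (X i - C (c i)).totalDegree :=
        (totalDegree_finsetProd _ _).trans (sum_le_sum fun i _ => totalDegree_pow _ _)
    _ ≤ ∑ i ∈ s.support, s i := sum_le_sum fun i _ => mul_le_of_le_one_right' (hlin i)
    _ ≤ P.totalDegree := le_totalDegree hs

lemma phaseLaplacian_shiftVars [Fintype σ] (c : σ → R) (P : MvPolynomial σ R) :
    phaseLaplacian (shiftVars c P) = shiftVars c (phaseLaplacian P) := by
  simp only [phaseLaplacian, polyLaplacian_apply, pderiv_shiftVars, map_add, map_sum, map_pow]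

end Translation

section QuasiTrefftz

variable {ι : Type*} [Fintype ι]

lemma exists_iteratedFDeriv_phaseLaplacian_add_eq_zero [Nonempty ι] {N : ℕ}
    {x₀ : EuclideanSpace ℝ ι} {g : EuclideanSpace ℝ ι → ℂ} (hg : ContDiffAt ℝ N g x₀) :
    ∃ P : MvPolynomial ι ℂ, P.totalDegree ≤ N + 2 ∧ ∀ m ≤ N,
      iteratedFDeriv ℝ m (fun x => eval (fun i => (x i : ℂ)) (phaseLaplacian P) + g x) x₀ = 0 := by
  obtain ⟨G, hG⟩ := exists_mvPolynomial_eval_eq_taylorPolynomial g N x₀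
  obtain ⟨P, hdeg, hP⟩ := exists_phaseLaplacian_add_mem_pow_idealOfVars G (N + 1)
  let L (i : ι) : EuclideanSpace ℝ ι →L[ℝ] ℂ := Complex.ofRealCLM ∘L EuclideanSpace.proj i
  let c (i : ι) : ℂ := x₀ i
  refine ⟨shiftVars c P, (totalDegree_shiftVars_le c P).trans hdeg, fun m hm => ?_⟩
  have hsplit (x : EuclideanSpace ℝ ι) :
      eval (fun i => (x i : ℂ)) (phaseLaplacian (shiftVars c P)) + g x =
        eval (L · (x - x₀)) (phaseLaplacian P + G) +
          (g x - taylorPolynomial ℝ g N x₀ (x - x₀)) := by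
    have hL : (L · (x - x₀)) = (fun i => (x i : ℂ)) - c := by
      funext i
      simp [L, c]
    have hGx : eval (L · (x - x₀)) G = taylorPolynomial ℝ g N x₀ (x - x₀) := hG (x - x₀)
    rw [phaseLaplacian_shiftVars, eval_shiftVars, map_add, hGx, hL]
    ring
  have hpoly : ContDiff ℝ m fun x => eval (L · (x - x₀)) (phaseLaplacian P + G) :=
    (contDiff_mvPolynomial_eval_clm L _).comp (contDiff_id.sub contDiff_const)
  have hrem : ContDiffAt ℝ m (fun x => g x - taylorPolynomial ℝ g N x₀ (x - x₀)) x₀ :=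
    (hg.of_le (by exact_mod_cast hm)).sub
      ((contDiff_taylorPolynomial g N x₀).comp (contDiff_id.sub contDiff_const)).contDiffAt
  simp only [hsplit]
  rw [fun_iteratedFDeriv_add_apply hpoly.contDiffAt hrem,
    iteratedFDeriv_sub_taylorPolynomial_eq_zero hg hm, add_zero,
    iteratedFDeriv_comp_sub (f := fun x => eval (L · x) (phaseLaplacian P + G)), sub_self,
    iteratedFDeriv_mvPolynomial_eval_clm_zero L hP (by omega)]

end QuasiTrefftz

/-- The set of polynomials `P` of total degree `≤ p` satisfying the
quasi-Trefftz property for the operator `Δ + g` (all derivatives of order `≤ p − 2` of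
`x ↦ ΔP(x) + ∑ᵢ (∂ᵢP(x))² + g(x)` vanish at `x0`) is infinite. -/
theorem stmt_13 (d p : ℕ) (hd : 1 ≤ d) (hp : 2 ≤ p)
    (x0 : EuclideanSpace ℝ (Fin d)) (g : EuclideanSpace ℝ (Fin d) → ℂ)
    (hg : ∃ V : Set (EuclideanSpace ℝ (Fin d)), IsOpen V ∧ x0 ∈ V ∧
      ContDiffOn ℝ (↑(p - 2) : ℕ∞) g V) :
    {P : MvPolynomial (Fin d) ℂ |
      P.totalDegree ≤ p ∧
      ∀ m : ℕ, m ≤ p - 2 →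
        iteratedFDeriv ℝ m (fun x : EuclideanSpace ℝ (Fin d) =>
          (∑ i : Fin d, MvPolynomial.eval (fun i' => (x i' : ℂ))
              (MvPolynomial.pderiv i (MvPolynomial.pderiv i P))) +
            (∑ i : Fin d,
              (MvPolynomial.eval (fun i' => (x i' : ℂ)) (MvPolynomial.pderiv i P)) ^ 2) +
            g x) x0 = 0}.Infinite := by
  obtain ⟨V, hVo, hxV, hgV⟩ := hg
  have hgx : ContDiffAt ℝ (p - 2 : ℕ) g x0 := by
    exact_mod_cast hgV.contDiffAt (hVo.mem_nhds hxV)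
  have : Nonempty (Fin d) := ⟨⟨0, hd⟩⟩
  obtain ⟨P, hdeg, hP⟩ := exists_iteratedFDeriv_phaseLaplacian_add_eq_zero hgx
  have hinj : Function.Injective fun c : ℂ => P + C c := fun a b hab => by simpa using hab
  refine Set.infinite_of_injective_forall_mem hinj fun c => ⟨?_, fun m hm => ?_⟩
  · exact (totalDegree_add _ _).trans (max_le (by omega) (by simp))
  · simpa only [phaseLaplacian, polyLaplacian_apply, map_add, map_sum, map_pow, pderiv_C,
      add_zero] using hP m hm
end

section
/- Let κ ∈ ℂ with κ ≠ 0, p ∈ ℕ, and x0 ∈ ℝ^2. For a unit vector d ∈ ℝ^2 (|d| = 1), let ψ_d : ℝ^2 → ℂ be the plane wave ψ_d(x) = exp(iκ d·(x − x0)), and let T_p ψ_d denote its Taylor polynomial of degree p centered at x0, namely T_p ψ_d(x) = Σ_{m=0}^{p} (iκ d·(x − x0))^m / m!. Then the ℂ-linear span of the set { T_p ψ_d : d ∈ ℝ^2, |d| = 1 } inside the space of complex polynomial functions on ℝ^2 has dimension at most 2p+1. -/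
/-!
Identify the plane with `ℂ`, so that a unit vector `d` becomes a number `w` with `w⁻¹ = conj w` and
`d · y = (conj y * w + y * w⁻¹) / 2`. A polynomial of degree `p` in this quantity is, for fixed `y`,
a Laurent polynomial in `w` with exponents in `[-p, p]`. Its `2 * p + 1` coefficients are functions
of `y` that do not depend on `d`, and their span contains every function obtained as `d` varies.
-/

open Polynomial
open scoped ComplexConjugate

lemma eval_mem_span_coeff {α R : Type*} [CommSemiring R] {n : ℕ} {P : α → R[X]}
    (hP : ∀ x, (P x).natDegree < n) (w : R) :
    (fun x ↦ (P x).eval w) ∈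
      Submodule.span R (Set.range fun (k : Fin n) x ↦ (P x).coeff k) := by
  have eval_eq_sum : (fun x ↦ (P x).eval w) =
      ∑ k : Fin n, w ^ (k : ℕ) • fun x ↦ (P x).coeff k := by
    ext x
    simp only [eval_eq_sum_range' (hP x), Finset.sum_range, Finset.sum_apply, Pi.smul_apply,
      smul_eq_mul, mul_comm]
  rw [eval_eq_sum]
  exact Submodule.sum_smul_mem _ _ fun k _ ↦ Submodule.subset_span (Set.mem_range_self k)

lemma rank_span_range_fin_le {R M : Type*} [Semiring R] [StrongRankCondition R] [AddCommMonoid M]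
    [Module R M] {n : ℕ} (v : Fin n → M) :
    Module.rank R (Submodule.span R (Set.range v)) ≤ n :=
  (rank_span_le _).trans (by simpa using Cardinal.mk_range_le_lift (f := v))

section LaurentNumerator

variable {K : Type*} [Field K]

/-- The polynomial `X ^ n * q (a * X + b * X⁻¹)`, for `q` of degree at most `n`. Homogenizing `q` to
degree `n` and substituting `(a * X ^ 2 + b, X)` clears the denominators. -/
noncomputable def laurentNumerator (q : K[X]) (n : ℕ) (a b : K) : K[X] :=
  MvPolynomial.aeval ![C a * X ^ 2 + C b, X] (q.homogenize n)

lemma natDegree_laurentNumerator_le (q : K[X]) (n : ℕ) (a b : K) :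
    (laurentNumerator q n a b).natDegree ≤ 2 * n := by
  have natDegree_le_two (i : Fin 2) :
      ((![C a * X ^ 2 + C b, X] : Fin 2 → K[X]) i).natDegree ≤ 2 := by
    fin_cases i
    · exact (by compute_degree : (C a * X ^ 2 + C b).natDegree ≤ 2)
    · exact natDegree_X_le.trans one_le_two
  rw [mul_comm]
  exact MvPolynomial.aeval_natDegree_le _ q.isHomogeneous_homogenize.totalDegree_le _
    natDegree_le_two

lemma eval_laurentNumerator {q : K[X]} {n : ℕ} (hq : q.natDegree ≤ n) (a b : K) {w : K}
    (hw : w ≠ 0) :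
    (laurentNumerator q n a b).eval w = w ^ n * q.eval (a * w + b * w⁻¹) := by
  have eval_comp : (laurentNumerator q n a b).eval w =
      MvPolynomial.eval ![a * w ^ 2 + b, w] (q.homogenize n) := by
    rw [laurentNumerator, ← coe_aeval_eq_eval, MvPolynomial.comp_aeval_apply,
      MvPolynomial.aeval_eq_eval]
    congr 2
    ext i
    fin_cases i <;> simp
  have quotient_eq : (a * w ^ 2 + b) / w = a * w + b * w⁻¹ := by field_simp
  rw [eval_comp, eval_homogenize hq _ hw]
  simp [quotient_eq, mul_comm]

theorem rank_span_eval_mul_add_mul_inv_le {α : Type*} {q : K[X]} {n : ℕ} (hq : q.natDegree ≤ n)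
    (a b : α → K) :
    Module.rank K (Submodule.span K
      {f : α → K | ∃ w : K, w ≠ 0 ∧ f = fun x ↦ q.eval (a x * w + b x * w⁻¹)}) ≤
      (2 * n + 1 : ℕ) := by
  refine (Submodule.rank_mono ?_).trans (rank_span_range_fin_le
    fun (k : Fin (2 * n + 1)) x ↦ (laurentNumerator q n (a x) (b x)).coeff k)
  rw [Submodule.span_le]
  rintro _ ⟨w, hw, rfl⟩
  have eval_eq_smul : (fun x ↦ q.eval (a x * w + b x * w⁻¹)) =
      (w ^ n)⁻¹ • fun x ↦ (laurentNumerator q n (a x) (b x)).eval w := by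
    ext x
    simp [eval_laurentNumerator hq _ _ hw, hw]
  rw [eval_eq_smul]
  exact Submodule.smul_mem _ _ (eval_mem_span_coeff
    (fun x ↦ Nat.lt_succ_of_le (natDegree_laurentNumerator_le q n (a x) (b x))) w)

end LaurentNumerator

lemma ofReal_inner_of_norm_eq_one {w : ℂ} (hw : ‖w‖ = 1) (z : ℂ) :
    ((inner ℝ w z : ℝ) : ℂ) = conj z / 2 * w + z / 2 * w⁻¹ := by
  rw [Complex.inner, Complex.re_eq_add_conj, Complex.inv_eq_conj hw, map_mul, Complex.conj_conj]
  ring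

lemma eval_trunc_rescale_exp {K : Type*} [Field K] [Algebra ℚ K] (n : ℕ) (c t : K) :
    (PowerSeries.trunc n (PowerSeries.rescale c (PowerSeries.exp K))).eval t =
      ∑ m ∈ Finset.range n, (c * t) ^ m / (m.factorial : K) := by
  rw [Polynomial.eval, PowerSeries.eval₂_trunc_eq_sum_range]
  refine Finset.sum_congr rfl fun m _ ↦ ?_
  simp only [PowerSeries.coeff_rescale, PowerSeries.coeff_exp, RingHom.id_apply, map_div₀, map_one,
    map_natCast]
  ring

theorem stmt_15_general {E : Type*} [NormedAddCommGroup E] [InnerProductSpace ℝ E]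
    (hE : Module.finrank ℝ E = 2) {q : ℂ[X]} {p : ℕ} (hq : q.natDegree ≤ p) (x₀ : E) :
    Module.rank ℂ (Submodule.span ℂ
      {f : E → ℂ | ∃ d : E, ‖d‖ = 1 ∧ f = fun x ↦ q.eval ((inner ℝ d (x - x₀) : ℝ) : ℂ)}) ≤
      (2 * p + 1 : ℕ) := by
  have : FiniteDimensional ℝ E := .of_finrank_pos (by lia)
  let e : E ≃ₗᵢ[ℝ] ℂ :=
    (Complex.isometryOfOrthonormal ((stdOrthonormalBasis ℝ E).reindex (finCongr hE))).symm
  refine (Submodule.rank_mono (Submodule.span_mono ?_)).trans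
    (rank_span_eval_mul_add_mul_inv_le hq
      (fun x ↦ conj (e (x - x₀)) / 2) (fun x ↦ e (x - x₀) / 2))
  rintro _ ⟨d, hd, rfl⟩
  have norm_e_d : ‖e d‖ = 1 := by rw [e.norm_map, hd]
  refine ⟨e d, norm_ne_zero_iff.mp (norm_e_d ▸ one_ne_zero), funext fun x ↦ ?_⟩
  rw [← ofReal_inner_of_norm_eq_one norm_e_d, e.inner_map_map]

/-- In dimension 2, the span of the degree-`p` Taylor polynomials
(centered at `x0`) of all plane waves `x ↦ exp(iκ d·(x − x0))`, `|d| = 1`, has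
dimension at most `2p + 1`. -/
theorem stmt_15 (κ : ℂ) (hκ : κ ≠ 0) (p : ℕ) (x0 : EuclideanSpace ℝ (Fin 2)) :
    Module.rank ℂ
      (Submodule.span ℂ
        {f : EuclideanSpace ℝ (Fin 2) → ℂ |
          ∃ dv : EuclideanSpace ℝ (Fin 2), ‖dv‖ = 1 ∧
            f = fun x => ∑ m ∈ Finset.range (p + 1),
              (Complex.I * κ * ((∑ i, dv i * (x i - x0 i) : ℝ) : ℂ)) ^ m /
                (Nat.factorial m : ℂ)}) ≤
      ((2 * p + 1 : ℕ) : Cardinal) := by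
  refine (Submodule.rank_mono (Submodule.span_mono ?_)).trans
    (stmt_15_general finrank_euclideanSpace_fin (Nat.lt_succ_iff.mp
      (PowerSeries.natDegree_trunc_lt (.rescale (Complex.I * κ) (.exp ℂ)) p)) x0)
  rintro _ ⟨d, hd, rfl⟩
  refine ⟨d, hd, ?_⟩
  simp only [eval_trunc_rescale_exp, PiLp.inner_apply, PiLp.sub_apply, Real.inner_apply]
end

section
/- Let κ ∈ ℂ with κ ≠ 0, p ∈ ℕ, and x0 ∈ ℝ^3. For a unit vector d ∈ ℝ^3 (|d| = 1), let ψ_d : ℝ^3 → ℂ be the plane wave ψ_d(x) = exp(iκ d·(x − x0)), and let T_p ψ_d denote its Taylor polynomial of degree p centered at x0, namely T_p ψ_d(x) = Σ_{m=0}^{p} (iκ d·(x − x0))^m / m!. Then the ℂ-linear span of the set { T_p ψ_d : d ∈ ℝ^3, |d| = 1 } inside the space of complex polynomial functions on ℝ^3 has dimension at most (p+1)^2. -/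
/-!
For fixed `x`, the Taylor polynomial `T_p ψ_d(x)` is a linear combination of powers `(d · y)ᵐ`,
`m ≤ p`, hence, as a function of the direction `d`, a polynomial of degree at most `p` restricted to
the sphere. Since `∑ dᵢ² = 1` there, a form of degree `m` may be multiplied by `∑ dᵢ²` without
changing its values, so every such restriction is the sum of a form of degree `p` and a form of
degree `p - 1`. In three variables these make up a space `V` of dimension at most
`(p + 2).choose 2 + (p + 1).choose 2 = (p + 1) ^ 2`. Finally, evaluation at `d` is a linear
functional on `V`, and `T_p ψ_d` is the image of that functional under a linear map defined on the
dual of `V`, so the span of all `T_p ψ_d` is no larger than `V`.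
-/

open Finset Module

section SpanOfSlices

variable {K S X : Type*} [Field K]

theorem rank_span_range_le_finrank_of_forall_mem (V : Submodule K (S → K)) [FiniteDimensional K V]
    (F : S → X → K) (hF : ∀ x, (fun s => F s x) ∈ V) :
    Module.rank K (Submodule.span K (Set.range F)) ≤ (finrank K V : Cardinal) := by
  let T : Dual K V →ₗ[K] X → K := LinearMap.pi fun x => Dual.eval K V ⟨fun s => F s x, hF x⟩
  have span_le_range : Submodule.span K (Set.range F) ≤ LinearMap.range T := by
    rw [Submodule.span_le]
    rintro _ ⟨s, rfl⟩
    exact ⟨LinearMap.proj s ∘ₗ V.subtype, rfl⟩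
  calc Module.rank K (Submodule.span K (Set.range F))
      ≤ Module.rank K (LinearMap.range T) := Submodule.rank_mono span_le_range
    _ = (finrank K (LinearMap.range T) : Cardinal) := (finrank_eq_rank K _).symm
    _ ≤ (finrank K V : Cardinal) := by
      exact_mod_cast T.finrank_range_le.trans_eq Subspace.dual_finrank_eq

end SpanOfSlices

section FinrankSup

variable {K E α : Type*} [Field K] [AddCommGroup E] [Module K E]

theorem finrank_finset_sup_le_sum (s : Finset α) (M : α → Submodule K E)
    [∀ i, FiniteDimensional K (M i)] :
    finrank K (s.sup M : Submodule K E) ≤ ∑ i ∈ s, finrank K (M i) := by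
  classical
  induction s using Finset.induction_on with
  | empty => simp
  | insert i s hi ih =>
    rw [sup_insert, sum_insert hi]
    exact (Submodule.finrank_add_le_finrank_add_finrank _ _).trans (by gcongr)

end FinrankSup

section PowersOfSubmodules

variable {R A : Type*} [CommSemiring R] [CommSemiring A] [Algebra R A]

theorem pow_le_pow_add_two_mul_of_one_le_sq {M : Submodule R A} (hM : 1 ≤ M ^ 2) (m j : ℕ) :
    M ^ m ≤ M ^ (m + 2 * j) := by
  rw [pow_add, pow_mul]
  exact le_mul_of_one_le_right' (one_le_pow_of_one_le' hM j)

-- At `p = 0` truncated subtraction makes `Icc (p - 1) p` the singleton `{0}`, so that the constants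
-- are not counted twice in the dimension bounds below.
theorem pow_le_sup_Icc_pow_of_one_le_sq {M : Submodule R A} (hM : 1 ≤ M ^ 2) {m p : ℕ}
    (hmp : m ≤ p) : M ^ m ≤ (Icc (p - 1) p).sup (M ^ ·) :=
  (pow_le_pow_add_two_mul_of_one_le_sq hM m ((p - m) / 2)).trans <|
    le_sup (f := (M ^ ·)) (mem_Icc.2 (by omega))

theorem sum_smul_pow_mem_sup_Icc_pow {M : Submodule R A} (hM : 1 ≤ M ^ 2) {y : A} (hy : y ∈ M)
    (c : ℕ → R) (p : ℕ) :
    ∑ m ∈ range (p + 1), c m • y ^ m ∈ (Icc (p - 1) p).sup (M ^ ·) :=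
  sum_mem fun m hm => Submodule.smul_mem _ (c m) <|
    pow_le_sup_Icc_pow_of_one_le_sq hM (mem_range_succ_iff.1 hm) (Submodule.pow_mem_pow M hy m)

theorem one_le_span_range_sq_of_sum_sq_eq_one {ι : Type*} [Fintype ι] {a : ι → A}
    (ha : ∑ i, a i ^ 2 = 1) : 1 ≤ Submodule.span R (Set.range a) ^ 2 := by
  rw [Submodule.one_le, ← ha]
  exact sum_mem fun i _ => Submodule.pow_mem_pow _ (Submodule.subset_span (Set.mem_range_self i)) 2

end PowersOfSubmodules

section FinrankPow

open scoped Pointwise in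
theorem range_pow_eq_range_sym_prod {ι N : Type*} [CommMonoid N] (a : ι → N) (k : ℕ) :
    Set.range a ^ k = Set.range fun s : Sym ι k => ((s : Multiset ι).map a).prod := by
  induction k with
  | zero =>
    rw [pow_zero, Set.range_unique, Subsingleton.elim default Sym.nil, ← Set.singleton_one]
    simp only [Sym.coe_nil, Multiset.map_zero, Multiset.prod_zero]
  | succ k ih =>
    ext x
    rw [pow_succ', ih, Set.mem_mul]
    constructor
    · rintro ⟨_, ⟨i, rfl⟩, _, ⟨s, rfl⟩, rfl⟩
      exact ⟨i ::ₛ s, by simp [Sym.coe_cons]⟩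
    · rintro ⟨s, rfl⟩
      obtain ⟨i, t, rfl⟩ := s.exists_eq_cons_of_succ
      exact ⟨a i, ⟨i, rfl⟩, _, ⟨t, rfl⟩, by simp [Sym.coe_cons]⟩

variable {R A ι : Type*} [CommRing R] [Nontrivial R] [CommRing A] [Algebra R A] [Fintype ι]

theorem finrank_span_range_pow_le_multichoose (a : ι → A) (k : ℕ) :
    finrank R (Submodule.span R (Set.range a) ^ k : Submodule R A) ≤
      (Fintype.card ι).multichoose k := by
  classical
  rw [Submodule.span_pow, range_pow_eq_range_sym_prod, ← Sym.card_sym_eq_multichoose]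
  exact finrank_range_le_card _

end FinrankPow

section Ridge

variable {K ι S X : Type*} [Field K] [Fintype ι]

theorem rank_span_range_sum_dotProduct_pow_le (v : S → ι → K) (hv : ∀ s, v s ⬝ᵥ v s = 1)
    (w : X → ι → K) (c : ℕ → K) (p : ℕ) :
    Module.rank K (Submodule.span K
        (Set.range fun s x => ∑ m ∈ range (p + 1), c m * (v s ⬝ᵥ w x) ^ m)) ≤
      ((∑ k ∈ Icc (p - 1) p, (Fintype.card ι).multichoose k : ℕ) : Cardinal) := by
  let coord : ι → S → K := fun i s => v s i
  let M : Submodule K (S → K) := Submodule.span K (Set.range coord)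
  have sum_coord_sq : ∑ i, coord i ^ 2 = 1 := by
    ext s
    simpa [coord, dotProduct, sq] using hv s
  have linear_mem (y : ι → K) : (fun s => v s ⬝ᵥ y) ∈ M := by
    convert sum_mem fun i (_ : i ∈ univ) =>
      M.smul_mem (y i) (Submodule.subset_span (Set.mem_range_self i)) using 1
    ext s
    simp [coord, dotProduct, mul_comm]
  have slice_mem (x : X) : (fun s => ∑ m ∈ range (p + 1), c m * (v s ⬝ᵥ w x) ^ m) ∈
      (Icc (p - 1) p).sup (M ^ ·) := by
    convert sum_smul_pow_mem_sup_Icc_pow (one_le_span_range_sq_of_sum_sq_eq_one sum_coord_sq)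
      (linear_mem (w x)) c p using 1
    ext s
    simp
  have finiteDimensional_pow (k : ℕ) : FiniteDimensional K (M ^ k : Submodule K (S → K)) :=
    Module.Finite.iff_fg.2 ((Submodule.fg_span (Set.finite_range coord)).pow k)
  refine (rank_span_range_le_finrank_of_forall_mem _ _ slice_mem).trans ?_
  exact_mod_cast (finrank_finset_sup_le_sum _ _).trans
    (sum_le_sum fun k _ => finrank_span_range_pow_le_multichoose coord k)

end Ridge

theorem multichoose_three_add_multichoose_three_succ (p : ℕ) :
    Nat.multichoose 3 p + Nat.multichoose 3 (p + 1) = (p + 2) ^ 2 := by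
  induction p with
  | zero => simp
  | succ p ih =>
    have recurrence (k : ℕ) : Nat.multichoose 3 (k + 1) = (k + 2) + Nat.multichoose 3 k := by
      rw [Nat.multichoose_succ_succ, Nat.multichoose_two]
    linarith [recurrence p, recurrence (p + 1)]

theorem sum_Icc_multichoose_three (p : ℕ) :
    ∑ k ∈ Icc (p - 1) p, Nat.multichoose 3 k = (p + 1) ^ 2 := by
  cases p with
  | zero => simp
  | succ p =>
    rw [Nat.add_sub_cancel, sum_Icc_succ_top p.le_succ, Icc_self, sum_singleton,
      multichoose_three_add_multichoose_three_succ]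

theorem stmt_16_general {ι : Type*} [Fintype ι] (κ : ℂ) (p : ℕ) (x0 : EuclideanSpace ℝ ι) :
    Module.rank ℂ
      (Submodule.span ℂ
        {f : EuclideanSpace ℝ ι → ℂ |
          ∃ dv : EuclideanSpace ℝ ι, ‖dv‖ = 1 ∧
            f = fun x => ∑ m ∈ Finset.range (p + 1),
              (Complex.I * κ * ((∑ i, dv i * (x i - x0 i) : ℝ) : ℂ)) ^ m /
                (Nat.factorial m : ℂ)}) ≤
      ((∑ k ∈ Icc (p - 1) p, (Fintype.card ι).multichoose k : ℕ) : Cardinal) := by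
  let v : {d : EuclideanSpace ℝ ι // ‖d‖ = 1} → ι → ℂ := fun d i => (d.1 i : ℂ)
  have hv (d : {d : EuclideanSpace ℝ ι // ‖d‖ = 1}) : v d ⬝ᵥ v d = 1 := by
    have sum_sq : ∑ i, d.1 i ^ 2 = 1 := by
      rw [← EuclideanSpace.real_norm_sq_eq, d.2, one_pow]
    simpa [v, dotProduct, sq] using congrArg Complex.ofReal sum_sq
  refine (Submodule.rank_mono (Submodule.span_mono ?_)).trans
    (rank_span_range_sum_dotProduct_pow_le v hv
      (fun (x : EuclideanSpace ℝ ι) i => ((x i - x0 i : ℝ) : ℂ))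
      (fun m => (Complex.I * κ) ^ m / (Nat.factorial m : ℂ)) p)
  rintro _ ⟨d, hd, rfl⟩
  refine ⟨⟨d, hd⟩, ?_⟩
  ext x
  simp [v, dotProduct, mul_pow, mul_div_right_comm]

/-- In dimension 3, the span of the degree-`p` Taylor polynomials
(centered at `x0`) of all plane waves `x ↦ exp(iκ d·(x − x0))`, `|d| = 1`, has
dimension at most `(p + 1)²`. -/
theorem stmt_16 (κ : ℂ) (hκ : κ ≠ 0) (p : ℕ) (x0 : EuclideanSpace ℝ (Fin 3)) :
    Module.rank ℂ
      (Submodule.span ℂ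
        {f : EuclideanSpace ℝ (Fin 3) → ℂ |
          ∃ dv : EuclideanSpace ℝ (Fin 3), ‖dv‖ = 1 ∧
            f = fun x => ∑ m ∈ Finset.range (p + 1),
              (Complex.I * κ * ((∑ i, dv i * (x i - x0 i) : ℝ) : ℂ)) ^ m /
                (Nat.factorial m : ℂ)}) ≤
      (((p + 1) ^ 2 : ℕ) : Cardinal) := by
  simpa only [Fintype.card_fin, sum_Icc_multichoose_three] using stmt_16_general κ p x0
end
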